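/- arXiv:2004.07421 — 3 statements merged into one kernel-verified Lean document; each statement's English description precedes it below -/
import Mathlib

section
/- Let Ω ⊂ ℂⁿ be a bounded convex domain all of whose boundary points are Dini-smooth, and fix z₀ ∈ Ω. If (x_n) and (y_n) are sequences in Ω with x_n → ξ and y_n → ξ for some ξ ∈ ∂Ω, then the Gromov products with respect to the Kobayashi distance satisfy (x_n | y_n)_{z₀} → ∞ as n → ∞. -/
open Metric Set MeasureTheory Filter Topology

noncomputable section

variable {E : Type*} [NormedAddCommGroup E] [NormedSpace ℂ E]

/-- Distance from `x` to the boundary of `D`. -/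
def bdist (D : Set E) (x : E) : ℝ := Metric.infDist x (frontier D)

/-- Distance from `x` to the boundary of `D` along the complex line `x + ℂ v`. -/
def bdistDir (D : Set E) (x v : E) : ℝ :=
  Metric.infDist x (frontier D ∩ {w | ∃ c : ℂ, w = x + c • v})

/-- The infinitesimal Kobayashi (pseudo-)metric of `D ⊆ E`. -/
def kobMetric (D : Set E) (x v : E) : ℝ :=
  sInf { r : ℝ | ∃ (f : ℂ → E) (ξ : ℂ),
    DifferentiableOn ℂ f (ball (0:ℂ) 1) ∧ MapsTo f (ball (0:ℂ) 1) D ∧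
    f 0 = x ∧ ξ • derivWithin f (ball (0:ℂ) 1) 0 = v ∧ r = ‖ξ‖ }

/-- `σ` is absolutely continuous on `[a,b]`, with a.e. derivative `g`. -/
def IsACWithDeriv (σ g : ℝ → E) (a b : ℝ) : Prop :=
  IntervalIntegrable g volume a b ∧
  ∀ t ∈ Icc a b, σ t = σ a + ∫ s in a..t, g s

/-- The Kobayashi pseudo-distance of `D`, defined via lengths of absolutely
continuous curves (Venturini's description). -/
def kobDist (D : Set E) (x y : E) : ℝ :=
  sInf { r : ℝ | ∃ (a b : ℝ) (σ g : ℝ → E), a ≤ b ∧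
    IsACWithDeriv σ g a b ∧ MapsTo σ (Icc a b) D ∧ σ a = x ∧ σ b = y ∧
    r = ∫ t in a..b, kobMetric D (σ t) (g t) }

/-- Log-type convex domain, with explicit constants `C, ν > 0`. -/
def LogTypeConvexWith (D : Set E) (C ν : ℝ) : Prop :=
  IsOpen D ∧ D.Nonempty ∧ Bornology.IsBounded D ∧ Convex ℝ D ∧ 0 < C ∧ 0 < ν ∧
  ∀ z ∈ D, ∀ v : E, v ≠ 0 →
    bdistDir D z v ≤ C / |Real.log (bdist D z)| ^ (1 + ν)

/-- Log-type convex domain. -/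
def LogTypeConvex (D : Set E) : Prop := ∃ C ν : ℝ, LogTypeConvexWith D C ν

/-- A `ℂ`-convex set: every nonempty intersection with a complex affine line is
connected and simply connected. -/
def CConvex (D : Set E) : Prop :=
  ∀ z v : E, v ≠ 0 → (D ∩ {w | ∃ c : ℂ, w = z + c • v}).Nonempty →
    IsConnected (D ∩ {w | ∃ c : ℂ, w = z + c • v}) ∧
    SimplyConnectedSpace ↥(D ∩ {w | ∃ c : ℂ, w = z + c • v})

/-- Log-type `ℂ`-convex domain. -/
def LogTypeCConvex (D : Set E) : Prop :=
  IsOpen D ∧ D.Nonempty ∧ Bornology.IsBounded D ∧ CConvex D ∧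
  ∃ C ν : ℝ, 0 < C ∧ 0 < ν ∧
    ∀ z ∈ D, ∀ v : E, v ≠ 0 →
      bdistDir D z v ≤ C / |Real.log (bdist D z)| ^ (1 + ν)

/-- `σ : [a,b] → D` (with a.e. derivative `g`) is a `(λ,κ)`-almost geodesic for the
Kobayashi distance of `D`. -/
def AlmostGeodesicOn (D : Set E) (lam kap : ℝ) (σ g : ℝ → E) (a b : ℝ) : Prop :=
  MapsTo σ (Icc a b) D ∧ IsACWithDeriv σ g a b ∧
  (∀ s ∈ Icc a b, ∀ t ∈ Icc a b,
    (1 / lam) * |t - s| - kap ≤ kobDist D (σ s) (σ t) ∧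
    kobDist D (σ s) (σ t) ≤ lam * |t - s| + kap) ∧
  (∀ᵐ t ∂volume, t ∈ Icc a b → kobMetric D (σ t) (g t) ≤ lam)

/-- `σ : [a,b] → D` is a `C`-rough geodesic for the Kobayashi distance of `D`. -/
def RoughGeodesicOn (D : Set E) (C : ℝ) (σ : ℝ → E) (a b : ℝ) : Prop :=
  MapsTo σ (Icc a b) D ∧
  ∀ s ∈ Icc a b, ∀ t ∈ Icc a b,
    |t - s| - C ≤ kobDist D (σ s) (σ t) ∧ kobDist D (σ s) (σ t) ≤ |t - s| + C

/-- `ρ` is a `C¹` local defining function for `D` near `ξ` on the open set `W`. -/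
def IsLocalDefiningFn (D : Set E) (ξ : E) (W : Set E) (ρ : E → ℝ) : Prop :=
  IsOpen W ∧ ξ ∈ W ∧ ContDiffOn ℝ 1 ρ W ∧ (∀ x ∈ W, fderiv ℝ ρ x ≠ 0) ∧
  D ∩ W = {x ∈ W | ρ x < 0} ∧ frontier D ∩ W = {x ∈ W | ρ x = 0}

/-- `ξ` is a Dini-smooth boundary point of `D`: the boundary is `C¹` near `ξ` and the
unit normal admits a modulus of continuity `ω` satisfying the Dini condition. -/
def DiniSmoothBoundaryPoint (D : Set E) (ξ : E) : Prop :=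
  ∃ (W : Set E) (ρ : E → ℝ) (ω : ℝ → ℝ),
    IsLocalDefiningFn D ξ W ρ ∧
    (∀ t ∈ Icc (0:ℝ) 1, 0 ≤ ω t) ∧ MonotoneOn ω (Icc (0:ℝ) 1) ∧
    IntegrableOn (fun t => ω t / t) (Ioc (0:ℝ) 1) ∧
    ∀ x ∈ frontier D ∩ W, ∀ y ∈ frontier D ∩ W, ‖x - y‖ ≤ 1 →
      ‖(‖fderiv ℝ ρ x‖)⁻¹ • fderiv ℝ ρ x - (‖fderiv ℝ ρ y‖)⁻¹ • fderiv ℝ ρ y‖ ≤ ω ‖x - y‖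

/-- `D` has `C^{1,ε}` boundary: near every boundary point there is a `C¹` defining
function whose differential is `ε`-Hölder. -/
def HolderC1Boundary (D : Set E) (ε : ℝ) : Prop :=
  ∀ ξ ∈ frontier D, ∃ (W : Set E) (ρ : E → ℝ) (M : ℝ), 0 < M ∧
    IsLocalDefiningFn D ξ W ρ ∧
    ∀ x ∈ W, ∀ y ∈ W, ‖fderiv ℝ ρ x - fderiv ℝ ρ y‖ ≤ M * ‖x - y‖ ^ ε

/-- The complex affine tangent hyperplane of `∂D` at `x`, computed from a local
defining function `ρ`. -/
def complexTangentHyperplane (ρ : E → ℝ) (x : E) : Set E :=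
  {w : E | fderiv ℝ ρ x (w - x) = 0 ∧ fderiv ℝ ρ x ((Complex.I : ℂ) • (w - x)) = 0}

/-- The Gromov product of `x` and `y` with respect to the base point `o`, for the
Kobayashi distance of `D`. -/
def gromovProd (D : Set E) (o x y : E) : ℝ :=
  (kobDist D x o + kobDist D o y - kobDist D x y) / 2

end



/-- Fundamental theorem of calculus for the logarithm of a positive absolutely continuous
function. -/
lemma log_ftc {u g : ℝ → ℝ} {a b : ℝ} (hab : a ≤ b) (hg : IntervalIntegrable g volume a b)
    (hu : ∀ t ∈ Icc a b, u t = u a + ∫ s in a..t, g s) (hpos : ∀ t ∈ Icc a b, 0 < u t) :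
    IntervalIntegrable (fun t => g t / u t) volume a b ∧
      ∫ t in a..b, g t / u t = Real.log (u b) - Real.log (u a) := by
  have hI : uIcc a b = Icc a b := uIcc_of_le hab
  set U : ℝ → ℝ := fun t => u a + ∫ s in a..t, g s with hU
  have hUu : ∀ t ∈ Icc a b, U t = u t := fun t ht => (hu t ht).symm
  have hac0 := hg.absolutelyContinuousOnInterval_intervalIntegral (c := a) (by simp)
  have hUc : ContinuousOn U (Icc a b) := by
    have := hac0.continuousOn
    rw [hI] at this
    exact continuousOn_const.add this
  have huc : ContinuousOn u (Icc a b) := hUc.congr (fun t ht => (hUu t ht).symm)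
  obtain ⟨t0, ht0, hmin⟩ := isCompact_Icc.exists_isMinOn (nonempty_Icc.2 hab) huc
  set c := u t0 with hc
  have hc0 : 0 < c := hpos _ ht0
  have hcle : ∀ t ∈ Icc a b, c ≤ u t := fun t ht => hmin ht
  have hlip : ∀ x y : ℝ, c ≤ x → c ≤ y → |Real.log x - Real.log y| ≤ |x - y| / c := by
    have key : ∀ x y : ℝ, c ≤ x → c ≤ y → y ≤ x → Real.log x - Real.log y ≤ (x - y) / c := by
      intro x y hx hy hxy
      have hy0 : 0 < y := by linarith
      have hx0 : 0 < x := by linarith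
      rw [← Real.log_div hx0.ne' hy0.ne']
      have h1 := Real.log_le_sub_one_of_pos (div_pos hx0 hy0)
      have h2 : x / y - 1 = (x - y) / y := by field_simp
      rw [h2] at h1
      refine h1.trans ?_
      gcongr
    intro x y hx hy
    rcases le_total y x with h | h
    · rw [abs_of_nonneg (sub_nonneg.2 h), abs_of_nonneg]
      · exact key x y hx hy h
      · exact sub_nonneg.2 (Real.log_le_log (by linarith) h)
    · rw [abs_sub_comm, abs_sub_comm x y, abs_of_nonneg (sub_nonneg.2 h), abs_of_nonneg]
      · exact key y x hy hx h
      · exact sub_nonneg.2 (Real.log_le_log (by linarith) h)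
  have hF : AbsolutelyContinuousOnInterval (fun t => Real.log (U t)) a b := by
    rw [absolutelyContinuousOnInterval_iff] at hac0 ⊢
    intro ε hε
    obtain ⟨δ, hδ, H⟩ := hac0 (ε * c) (by positivity)
    refine ⟨δ, hδ, fun E hE hs => ?_⟩
    have := H E hE hs
    have h3 : ∑ i ∈ Finset.range E.1, dist (Real.log (U (E.2 i).1)) (Real.log (U (E.2 i).2))
        ≤ (∑ i ∈ Finset.range E.1, dist (∫ s in a..(E.2 i).1, g s) (∫ s in a..(E.2 i).2, g s)) / c := by
      rw [Finset.sum_div]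
      refine Finset.sum_le_sum (fun i hi => ?_)
      obtain ⟨h1, h2⟩ := hE.1 i hi
      rw [hI] at h1 h2
      have := hlip (U (E.2 i).1) (U (E.2 i).2) (by rw [hUu _ h1]; exact hcle _ h1)
        (by rw [hUu _ h2]; exact hcle _ h2)
      rw [Real.dist_eq, Real.dist_eq]
      refine this.trans (le_of_eq ?_)
      simp [hU]
    refine h3.trans_lt ?_
    rw [div_lt_iff₀ hc0]
    exact this
  have hderiv : ∀ᵐ t, t ∈ uIcc a b → deriv (fun t => Real.log (U t)) t = g t / u t := by
    filter_upwards [hg.ae_hasDerivAt_integral] with t ht htm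
    have h1 := (ht htm a (by simp)).const_add (u a)
    rw [hI] at htm
    have h2 : U t ≠ 0 := by rw [hUu t htm]; exact (hpos t htm).ne'
    have h3 := (HasDerivAt.log h1 h2).deriv
    rw [← hUu t htm]
    exact h3
  have hintg := hF.intervalIntegrable_deriv
  constructor
  · refine hintg.congr_ae ?_
    rw [EventuallyEq, ae_restrict_iff' measurableSet_uIoc]
    filter_upwards [hderiv] with t ht htm
    exact ht (uIoc_subset_uIcc htm)
  · have h4 := hF.integral_deriv_eq_sub
    simp only [hUu b ⟨hab, le_rfl⟩, hUu a ⟨le_rfl, hab⟩] at h4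
    rw [← h4]
    apply intervalIntegral.integral_congr_ae
    filter_upwards [hderiv] with t ht htm
    exact (ht (uIoc_subset_uIcc htm)).symm

/-- A Dini modulus has an integrable majorant `W` of `ω m / m`, uniformly for `m ≥ t`. -/
lemma dini_majorant {ω : ℝ → ℝ} (h0 : ∀ t ∈ Icc (0:ℝ) 1, 0 ≤ ω t)
    (hm : MonotoneOn ω (Icc (0:ℝ) 1))
    (hi : IntegrableOn (fun t => ω t / t) (Ioc (0:ℝ) 1)) {r₀ : ℝ} (hr : 0 < r₀) (hr2 : r₀ ≤ 1/2) :
    ∃ (W : ℝ → ℝ) (r₁ : ℝ), 0 < r₁ ∧ r₁ ≤ r₀ ∧ IntegrableOn W (Ioc (0:ℝ) 1) ∧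
      (∀ t, 0 < t → t ≤ r₁ → 1 / r₀ ≤ W t ∧ t * W t ≤ 1/4 ∧ ∀ m, t ≤ m → m ≤ r₀ → ω m ≤ m * W t) := by
  set μ : Measure ℝ := volume.restrict (Ioc (0:ℝ) 1) with hμ
  set G : ℝ × ℝ → ℝ := fun p => (Ioc p.1 1).indicator (fun s => ω s / s / s) p.2 with hG
  -- joint integrability of (t, s) ↦ 1_{t < s} ω(s)/s²
  have hωm : AEStronglyMeasurable (fun s => ω s / s / s) μ :=
    hi.aestronglyMeasurable.div₀ measurable_id.aestronglyMeasurable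
  have hGm : AEStronglyMeasurable G (μ.prod μ) := by
    have h1 : AEStronglyMeasurable (fun p : ℝ × ℝ => ω p.2 / p.2 / p.2) (μ.prod μ) := hωm.comp_snd
    have hS : MeasurableSet {p : ℝ × ℝ | p.1 < p.2 ∧ p.2 ≤ 1} :=
      (measurableSet_lt measurable_fst measurable_snd).inter
        (measurableSet_le measurable_snd measurable_const)
    have h2 := h1.indicator hS
    refine h2.congr (Eventually.of_forall fun p => ?_)
    simp only [hG, indicator, mem_Ioc, mem_ofPred_eq]
  have hGi : Integrable G (μ.prod μ) := by
    rw [integrable_prod_iff' hGm]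
    have hsl : ∀ s ∈ Ioc (0:ℝ) 1, (fun t => G (t, s)) =
        (Iio s).indicator (fun _ => ω s / s / s) := by
      intro s hs
      funext t
      simp only [hG, indicator, mem_Ioc, mem_Iio, hs.2, and_true]
    constructor
    · rw [hμ, ae_restrict_iff' measurableSet_Ioc]
      refine Eventually.of_forall fun s hs => ?_
      rw [hsl s hs]
      exact (integrable_const _).indicator measurableSet_Iio
    · refine hi.congr ?_
      rw [EventuallyEq, ae_restrict_iff' measurableSet_Ioc]
      refine Eventually.of_forall fun s hs => ?_
      have hn : (fun t => ‖G (t, s)‖) = (Iio s).indicator (fun _ => ω s / s / s) := by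
        funext t
        have := congrFun (hsl s hs) t
        rw [this]
        rw [Real.norm_of_nonneg]
        apply indicator_nonneg
        intro _ _
        have := h0 s ⟨hs.1.le, hs.2⟩
        have := hs.1
        positivity
      rw [hn, integral_indicator measurableSet_Iio, hμ, Measure.restrict_restrict measurableSet_Iio]
      have : Iio s ∩ Ioc (0:ℝ) 1 = Ioo 0 s := by
        ext t; simp only [mem_inter_iff, mem_Iio, mem_Ioc, mem_Ioo]
        constructor
        · rintro ⟨h1, h2, h3⟩; exact ⟨h2, h1⟩
        · rintro ⟨h1, h2⟩; exact ⟨h2, h1, by linarith [hs.2]⟩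
      rw [this, setIntegral_const]
      have hs0 := hs.1
      simp [hs0.le]
      field_simp
  have hJ := hGi.integral_prod_left
  set J : ℝ → ℝ := fun t => ∫ s, G (t, s) ∂μ with hJd
  have hω0 : ∀ s ∈ Ioc (0:ℝ) 1, 0 ≤ ω s / s / s := by
    intro s hs
    have := h0 s ⟨hs.1.le, hs.2⟩
    have := hs.1
    positivity
  have hJeq : ∀ t, 0 < t → J t = ∫ s in Ioc t 1, ω s / s / s := by
    intro t ht
    simp only [hJd, hG]
    rw [integral_indicator measurableSet_Ioc, hμ, Measure.restrict_restrict measurableSet_Ioc]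
    congr 2
    ext s; simp only [mem_inter_iff, mem_Ioc]
    constructor
    · rintro ⟨h1, h2⟩; exact h1
    · rintro ⟨h1, h2⟩; exact ⟨⟨h1, h2⟩, by linarith, h2⟩
  have hintg : ∀ t, 0 < t → IntegrableOn (fun s => ω s / s / s) (Ioc t 1) := by
    intro t ht
    have h1 : IntegrableOn (fun s => ω s / s) (Ioc t 1) :=
      hi.mono_set (Ioc_subset_Ioc_left ht.le)
    have h2 : IntegrableOn (fun s => (1/t) * (ω s / s)) (Ioc t 1) := h1.const_mul _
    refine Integrable.mono' h2 (hωm.mono_measure ?_) ?_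
    · exact Measure.restrict_mono (Ioc_subset_Ioc_left ht.le) le_rfl
    · rw [ae_restrict_iff' measurableSet_Ioc]
      refine Eventually.of_forall fun s hs => ?_
      have hs' : s ∈ Ioc (0:ℝ) 1 := ⟨by linarith [hs.1], hs.2⟩
      rw [Real.norm_of_nonneg (hω0 s hs'), div_eq_mul_one_div, mul_comm]
      have : 0 ≤ ω s / s := div_nonneg (h0 s ⟨hs'.1.le, hs'.2⟩) hs'.1.le
      have := hs.1
      gcongr
  have hJnn : ∀ t, 0 < t → 0 ≤ J t := by
    intro t ht
    rw [hJeq t ht]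
    exact setIntegral_nonneg measurableSet_Ioc
      (fun s hs => hω0 s ⟨by linarith [hs.1], hs.2⟩)
  have hJanti : ∀ t t', 0 < t → t ≤ t' → J t' ≤ J t := by
    intro t t' ht htt
    rw [hJeq t ht, hJeq t' (by linarith)]
    refine setIntegral_mono_set (hintg t ht) ?_ ?_
    · rw [EventuallyLE, ae_restrict_iff' measurableSet_Ioc]
      exact Eventually.of_forall (fun s hs => hω0 s ⟨by linarith [hs.1], hs.2⟩)
    · exact (Ioc_subset_Ioc_left htt).eventuallyLE
  have hdom : ∀ m, 0 < m → m ≤ r₀ → ω m ≤ m * (4 * J m) := by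
    intro m hm0 hmr
    have h1 : ∫ s in Ioc m (2*m), ω m / (2*m) / (2*m) ≤ J m := by
      rw [hJeq m hm0]
      have hsub : Ioc m (2*m) ⊆ Ioc m 1 := Ioc_subset_Ioc_right (by linarith)
      calc ∫ s in Ioc m (2*m), ω m / (2*m) / (2*m) ≤ ∫ s in Ioc m (2*m), ω s / s / s := by
            refine setIntegral_mono_on ?_ ((hintg m hm0).mono_set hsub) measurableSet_Ioc ?_
            · simp
            · intro s hs
              have hs' := hsub hs
              have hmm := hm (show m ∈ Icc (0:ℝ) 1 from ⟨hm0.le, by linarith⟩)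
                (show s ∈ Icc (0:ℝ) 1 from ⟨by linarith [hs.1], hs'.2⟩) hs.1.le
              have := h0 m ⟨hm0.le, by linarith⟩
              have := h0 s ⟨by linarith [hs.1], hs'.2⟩
              have : 0 < s := by linarith [hs.1]
              have := hs.2
              gcongr
        _ ≤ _ := by
            refine setIntegral_mono_set (hintg m hm0) ?_ hsub.eventuallyLE
            rw [EventuallyLE, ae_restrict_iff' measurableSet_Ioc]
            exact Eventually.of_forall (fun s hs => hω0 s ⟨by linarith [hs.1], hs.2⟩)
    rw [setIntegral_const] at h1
    have h2 : (volume.real (Ioc m (2*m))) • (ω m / (2*m) / (2*m)) = ω m / (4 * m) := by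
      rw [Real.volume_real_Ioc_of_le (by linarith)]
      simp only [smul_eq_mul]
      field_simp
      ring
    rw [h2, div_le_iff₀ (by positivity)] at h1
    have := h0 m ⟨hm0.le, by linarith⟩
    nlinarith [hJnn m hm0]
  have hJi : IntegrableOn J (Icc (0:ℝ) 1) := by
    rw [integrableOn_Icc_iff_integrableOn_Ioc]; exact hJ
  have hcont := intervalIntegral.continuousOn_primitive hJi
  have hlim : Tendsto (fun x => ∫ t in Ioc 0 x, J t) (𝓝[Icc (0:ℝ) 1] 0) (𝓝 0) := by
    have := hcont 0 ⟨le_rfl, zero_le_one⟩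
    simpa [ContinuousWithinAt] using this
  have hev := hlim.eventually (gt_mem_nhds (show (0:ℝ) < 1/32 by norm_num))
  rw [eventually_nhdsWithin_iff, Metric.eventually_nhds_iff] at hev
  obtain ⟨η, hη, hev⟩ := hev
  have htJ : ∀ t, 0 < t → t < η → t ≤ 1 → t * J t ≤ 1/32 := by
    intro t ht htη ht1
    have h1 := hev (y := t) (by rw [Real.dist_eq, sub_zero, abs_of_pos ht]; exact htη) ⟨ht.le, ht1⟩
    have h2 : ∫ s in Ioc 0 t, J t ≤ ∫ s in Ioc 0 t, J s := by
      refine setIntegral_mono_on (by simp) ?_ measurableSet_Ioc ?_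
      · exact IntegrableOn.mono_set hJ (Ioc_subset_Ioc_right ht1)
      · intro s hs; exact hJanti s t hs.1 hs.2
    rw [setIntegral_const, Real.volume_real_Ioc_of_le ht.le] at h2
    simp only [smul_eq_mul, sub_zero] at h2
    linarith
  refine ⟨fun t => 1 / r₀ + 4 * J t, min (min r₀ (η/2)) (r₀ / 8), by positivity,
    (min_le_left _ _).trans (min_le_left _ _), ?_, ?_⟩
  · exact (integrable_const _).add (hJ.const_mul 4)
  · intro t ht htr
    have ht1 : t ≤ r₀ := htr.trans ((min_le_left _ _).trans (min_le_left _ _))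
    have ht2 : t ≤ η/2 := htr.trans ((min_le_left _ _).trans (min_le_right _ _))
    have ht3 : t ≤ r₀/8 := htr.trans (min_le_right _ _)
    refine ⟨by linarith [hJnn t ht], ?_, ?_⟩
    · have h1 := htJ t ht (by linarith) (by linarith)
      have h2 : t * (1 / r₀) ≤ 1/8 := by
        rw [mul_one_div, div_le_iff₀ hr]; linarith
      linarith
    · intro m hm1 hm2
      have hm0 : 0 < m := by linarith
      refine (hdom m hm0 hm2).trans ?_
      have := hJanti t m ht hm1
      have : 0 < 1 / r₀ := by positivity
      gcongr
      linarith

section KobMetric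

variable {E : Type*} [NormedAddCommGroup E] [NormedSpace ℂ E]

lemma kobMetric_bdd (D : Set E) (x v : E) : BddBelow { r : ℝ | ∃ (f : ℂ → E) (ξ : ℂ),
    DifferentiableOn ℂ f (ball (0:ℂ) 1) ∧ MapsTo f (ball (0:ℂ) 1) D ∧
    f 0 = x ∧ ξ • derivWithin f (ball (0:ℂ) 1) 0 = v ∧ r = ‖ξ‖ } := by
  refine ⟨0, ?_⟩
  rintro r ⟨f, ξ, -, -, -, -, rfl⟩
  exact norm_nonneg _

lemma kobMetric_nonneg (D : Set E) (x v : E) : 0 ≤ kobMetric D x v := by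
  apply Real.sInf_nonneg
  rintro r ⟨f, ξ, -, -, -, -, rfl⟩
  exact norm_nonneg _

lemma derivWithin_ball_zero (f : ℂ → E) : derivWithin f (ball (0:ℂ) 1) 0 = deriv f 0 :=
  derivWithin_of_isOpen isOpen_ball (by simp)

lemma kobMetric_le {D : Set E} {x v : E} {f : ℂ → E} {ξ : ℂ}
    (hf : DifferentiableOn ℂ f (ball (0:ℂ) 1)) (hm : MapsTo f (ball (0:ℂ) 1) D)
    (h0 : f 0 = x) (hd : ξ • deriv f 0 = v) : kobMetric D x v ≤ ‖ξ‖ :=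
  csInf_le (kobMetric_bdd D x v) ⟨f, ξ, hf, hm, h0, by rw [derivWithin_ball_zero]; exact hd, rfl⟩

/-- A disc through `z` in the direction `n`. -/
lemma kobMetric_le_of_disc {D : Set E} {p n : E} {t c ρ : ℝ} (hρ : 0 < ρ) (ht : |t - c| < ρ)
    (hD : ∀ ζ ∈ ball (c:ℂ) ρ, p + ζ • n ∈ D) (s : ℂ) (hs : ‖s‖ = 1) :
    kobMetric D (p + (t:ℂ) • n) (s • n) ≤ ρ / (ρ^2 - (t - c)^2) := by
  have hsq : (t - c)^2 < ρ^2 := by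
    rw [sq_lt_sq, abs_of_pos hρ]; exact ht
  set b : ℝ := (t - c) / ρ with hb
  have hb1 : |b| < 1 := by
    rw [hb, abs_div, abs_of_pos hρ, div_lt_one hρ]; exact ht
  have hb2 : b^2 < 1 := by rw [sq_lt_one_iff_abs_lt_one]; exact hb1
  have hbn : ‖(b:ℂ)‖ < 1 := by simpa using hb1
  have hden : ∀ ζ ∈ ball (0:ℂ) 1, 1 + (b:ℂ) * ζ ≠ 0 := by
    intro ζ hζ h
    have h1 : (b:ℂ) * ζ = -1 := by linear_combination h
    have h2 : ‖(b:ℂ) * ζ‖ = 1 := by rw [h1]; simp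
    rw [norm_mul] at h2
    have h3 : ‖ζ‖ < 1 := by simpa using hζ
    nlinarith [norm_nonneg ζ, norm_nonneg (b:ℂ)]
  set φ : ℂ → ℂ := fun ζ => (c:ℂ) + ρ * ((ζ + b) / (1 + b * ζ)) with hφ
  have hφd : ∀ ζ ∈ ball (0:ℂ) 1, HasDerivAt φ
      ((ρ:ℂ) * ((1 * (1 + b * ζ) - (ζ + b) * (b * 1)) / (1 + b * ζ)^2)) ζ := by
    intro ζ hζ
    refine HasDerivAt.const_add _ (HasDerivAt.const_mul _ ?_)
    refine HasDerivAt.div ((hasDerivAt_id ζ).add_const _) ?_ (hden ζ hζ)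
    exact ((hasDerivAt_id ζ).const_mul _).const_add _
  have hφm : ∀ ζ ∈ ball (0:ℂ) 1, φ ζ ∈ ball (c:ℂ) ρ := by
    intro ζ hζ
    have h3 : ‖ζ‖ < 1 := by simpa using hζ
    rw [mem_ball, dist_eq_norm]
    have : φ ζ - c = ρ * ((ζ + b) / (1 + b * ζ)) := by simp [hφ]
    rw [this, norm_mul, norm_div, Complex.norm_real, Real.norm_of_nonneg hρ.le]
    have hlt : ‖ζ + b‖ < ‖1 + (b:ℂ) * ζ‖ := by
      rw [← sq_lt_sq₀ (norm_nonneg _) (norm_nonneg _), ← Complex.normSq_eq_norm_sq,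
        ← Complex.normSq_eq_norm_sq]
      have h4 : Complex.normSq ζ < 1 := by
        rw [Complex.normSq_eq_norm_sq]; nlinarith [norm_nonneg ζ]
      rw [Complex.normSq_apply] at h4 ⊢
      rw [Complex.normSq_apply]
      simp
      nlinarith
    have : ‖ζ + b‖ / ‖1 + (b:ℂ) * ζ‖ < 1 := by
      rw [div_lt_one (lt_of_le_of_lt (norm_nonneg _) hlt)]; exact hlt
    nlinarith
  have hφ0 : φ 0 = t := by
    simp only [hφ, hb]
    push_cast
    have : (ρ:ℂ) ≠ 0 := by exact_mod_cast hρ.ne'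
    simp only [zero_add, mul_zero, add_zero, div_one]
    rw [mul_div_cancel₀ _ this]
    ring
  have hφ'0 : HasDerivAt φ ((ρ:ℂ) * (1 - b^2)) 0 := by
    have := hφd 0 (by simp)
    convert this using 1
    simp only [mul_zero, add_zero, zero_add, one_pow, div_one, mul_one]
    ring
  have hpos : 0 < ρ * (1 - b^2) := mul_pos hρ (by linarith)
  have hder : HasDerivAt (fun ζ => p + φ ζ • n) (((ρ:ℂ) * (1 - b^2)) • n) 0 :=
    (hφ'0.smul_const n).const_add p
  have hne : ((ρ:ℂ) * (1 - b^2)) ≠ 0 := by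
    have := hpos.ne'
    exact_mod_cast this
  have key := kobMetric_le (D := D) (x := p + (t:ℂ) • n) (v := s • n) (f := fun ζ => p + φ ζ • n)
    (ξ := s / ((ρ:ℂ) * (1 - b^2))) ?_ ?_ ?_ ?_
  · refine key.trans (le_of_eq ?_)
    rw [norm_div, hs]
    have : ((ρ:ℂ) * (1 - b^2)) = ((ρ * (1 - b^2) : ℝ) : ℂ) := by push_cast; ring
    rw [this, Complex.norm_real, Real.norm_of_nonneg hpos.le, hb]
    have h5 : ρ^2 - (t-c)^2 ≠ 0 := by linarith
    have h6 : ρ * (1 - ((t - c)/ρ)^2) = (ρ^2 - (t-c)^2) / ρ := by field_simp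
    rw [h6]
    field_simp
  · intro ζ hζ
    exact (((hφd ζ hζ).smul_const n).const_add p).differentiableAt.differentiableWithinAt
  · intro ζ hζ
    exact hD _ (hφm ζ hζ)
  · simp only [hφ0]
  · rw [hder.deriv, smul_smul, div_mul_cancel₀ _ hne]

lemma kobMetric_le_of_ball {D : Set E} {z : E} {r : ℝ} (hr : 0 < r) (hD : ball z r ⊆ D) (v : E) :
    kobMetric D z v ≤ ‖v‖ / r := by
  by_cases hv : v = 0
  · subst hv
    have := kobMetric_le (D := D) (x := z) (v := 0) (f := fun _ => z) (ξ := 0)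
      (differentiableOn_const _) (fun _ _ => hD (mem_ball_self hr)) rfl (by simp)
    simpa using this
  · have hv0 : 0 < ‖v‖ := norm_pos_iff.2 hv
    have hder : HasDerivAt (fun ζ : ℂ => z + ζ • (((r / ‖v‖ : ℝ) : ℂ) • v))
        ((1:ℂ) • (((r / ‖v‖ : ℝ) : ℂ) • v)) 0 :=
      ((hasDerivAt_id (0:ℂ)).smul_const _).const_add z
    have key := kobMetric_le (D := D) (x := z) (v := v)
      (f := fun ζ : ℂ => z + ζ • (((r / ‖v‖ : ℝ) : ℂ) • v)) (ξ := ((‖v‖ / r : ℝ) : ℂ)) ?_ ?_ ?_ ?_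
    · rw [Complex.norm_real, Real.norm_of_nonneg (by positivity)] at key
      exact key
    · exact ((differentiable_id.smul_const _).const_add z).differentiableOn
    · intro ζ hζ
      apply hD
      have h3 : ‖ζ‖ < 1 := by simpa using hζ
      rw [mem_ball, dist_eq_norm, add_sub_cancel_left, norm_smul, norm_smul, Complex.norm_real,
        Real.norm_of_nonneg (by positivity)]
      field_simp
      nlinarith
    · simp
    · rw [hder.deriv, one_smul, smul_smul, ← Complex.ofReal_mul]
      have : ‖v‖ / r * (r / ‖v‖) = 1 := by field_simp
      rw [this]; simp

lemma kobMetric_set_nonempty {D : Set E} (hD : IsOpen D) {z : E} (hz : z ∈ D) (v : E) :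
    { r : ℝ | ∃ (f : ℂ → E) (ξ : ℂ),
    DifferentiableOn ℂ f (ball (0:ℂ) 1) ∧ MapsTo f (ball (0:ℂ) 1) D ∧
    f 0 = z ∧ ξ • derivWithin f (ball (0:ℂ) 1) 0 = v ∧ r = ‖ξ‖ }.Nonempty := by
  obtain ⟨r, hr, hb⟩ := Metric.isOpen_iff.1 hD z hz
  by_cases hv : v = 0
  · subst hv
    exact ⟨_, fun _ => z, 0, differentiableOn_const _, fun _ _ => hz, rfl, by simp, rfl⟩
  · have hv0 : 0 < ‖v‖ := norm_pos_iff.2 hv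
    have hder : HasDerivAt (fun ζ : ℂ => z + ζ • (((r / ‖v‖ : ℝ) : ℂ) • v))
        ((1:ℂ) • (((r / ‖v‖ : ℝ) : ℂ) • v)) 0 :=
      ((hasDerivAt_id (0:ℂ)).smul_const _).const_add z
    refine ⟨_, fun ζ : ℂ => z + ζ • (((r / ‖v‖ : ℝ) : ℂ) • v), ((‖v‖ / r : ℝ) : ℂ), ?_, ?_, ?_, ?_,
      rfl⟩
    · exact ((differentiable_id.smul_const _).const_add z).differentiableOn
    · intro ζ hζ
      apply hb
      have h3 : ‖ζ‖ < 1 := by simpa using hζ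
      rw [mem_ball, dist_eq_norm, add_sub_cancel_left, norm_smul, norm_smul, Complex.norm_real,
        Real.norm_of_nonneg (by positivity)]
      field_simp
      nlinarith
    · simp
    · rw [derivWithin_ball_zero, hder.deriv, one_smul, smul_smul, ← Complex.ofReal_mul]
      have : ‖v‖ / r * (r / ‖v‖) = 1 := by field_simp
      rw [this]; simp

/-- Schwarz lemma for maps of the disc into the right half plane. -/
lemma schwarz_halfplane {h : ℂ → ℂ} (hd : DifferentiableOn ℂ h (ball (0:ℂ) 1))
    (hp : ∀ ζ ∈ ball (0:ℂ) 1, 0 < (h ζ).re) : ‖deriv h 0‖ ≤ 2 * (h 0).re := by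
  set w := h 0 with hw
  have hw0 : 0 < w.re := hp 0 (by simp)
  have hden : ∀ ζ ∈ ball (0:ℂ) 1, h ζ + (starRingEnd ℂ) w ≠ 0 := by
    intro ζ hζ hh
    have := congrArg Complex.re hh
    simp at this
    linarith [hp ζ hζ]
  set g : ℂ → ℂ := fun ζ => (h ζ - w) / (h ζ + (starRingEnd ℂ) w) with hg
  have hgd : DifferentiableOn ℂ g (ball (0:ℂ) 1) :=
    (hd.sub_const _).div (hd.add_const _) hden
  have hg0 : g 0 = 0 := by simp [hg, hw]
  have hgm : MapsTo g (ball (0:ℂ) 1) (closedBall (g 0) 1) := by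
    intro ζ hζ
    rw [hg0, mem_closedBall, dist_zero_right]
    simp only [hg]
    rw [norm_div]
    apply div_le_one_of_le₀ _ (norm_nonneg _)
    rw [← sq_le_sq₀ (norm_nonneg _) (norm_nonneg _), ← Complex.normSq_eq_norm_sq,
        ← Complex.normSq_eq_norm_sq, Complex.normSq_apply, Complex.normSq_apply]
    simp
    nlinarith [hp ζ hζ]
  have h1 := Complex.norm_deriv_le_div_of_mapsTo_ball hgd hgm one_pos
  have hhd : HasDerivAt h (deriv h 0) 0 :=
    (hd.differentiableAt (isOpen_ball.mem_nhds (by simp))).hasDerivAt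
  have h2 : HasDerivAt g ((deriv h 0 * (h 0 + (starRingEnd ℂ) w) - (h 0 - w) * deriv h 0) /
      (h 0 + (starRingEnd ℂ) w)^2) 0 :=
    (hhd.sub_const _).div (hhd.add_const _) (hden 0 (by simp))
  rw [h2.deriv] at h1
  have h3 : w + (starRingEnd ℂ) w = ((2 * w.re : ℝ) : ℂ) := by
    rw [Complex.add_conj]
  have h4 : ((2 * w.re : ℝ) : ℂ) ≠ 0 := by
    have : 2 * w.re ≠ 0 := by positivity
    exact_mod_cast this
  rw [← hw, h3, sub_self, zero_mul, sub_zero, sq, mul_div_mul_right _ _ h4, norm_div,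
    Complex.norm_real, Real.norm_of_nonneg (by positivity)] at h1
  rw [div_le_iff₀ (by positivity)] at h1
  linarith

/-- Lower bound for the Kobayashi metric of a domain contained in a half space. -/
lemma kobMetric_lower {D : Set E} (hD : IsOpen D) {p : E} (ν : E →L[ℝ] ℝ)
    (hν : ∀ z ∈ D, ν (z - p) < 0) {z : E} (hz : z ∈ D) (v : E) :
    |ν v| / (2 * (- ν (z - p))) ≤ kobMetric D z v := by
  refine le_csInf (kobMetric_set_nonempty hD hz v) ?_
  rintro r ⟨f, ξ, hf, hm, h0, hd, rfl⟩
  rw [derivWithin_ball_zero] at hd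
  set ℓ : E →L[ℂ] ℂ := StrongDual.extendRCLike (-ν) with hℓ
  have hre : ∀ x, (ℓ x).re = - ν x := by
    intro x
    have := StrongDual.re_extendRCLike_apply (𝕜 := ℂ) (-ν) x
    rw [_root_.neg_apply] at this
    exact this
  set h : ℂ → ℂ := fun ζ => ℓ (f ζ - p) with hh
  have hhd : DifferentiableOn ℂ h (ball (0:ℂ) 1) :=
    ℓ.differentiable.comp_differentiableOn (hf.sub_const p)
  have hpos : ∀ ζ ∈ ball (0:ℂ) 1, 0 < (h ζ).re := by
    intro ζ hζ
    simp only [hh]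
    rw [hre]
    linarith [hν _ (hm hζ)]
  have key := schwarz_halfplane hhd hpos
  have hfd : HasDerivAt f (deriv f 0) 0 :=
    (hf.differentiableAt (isOpen_ball.mem_nhds (by simp))).hasDerivAt
  have hhd0 : HasDerivAt h (ℓ (deriv f 0)) 0 :=
    ℓ.hasFDerivAt.comp_hasDerivAt (0:ℂ) (hfd.sub_const p)
  rw [hhd0.deriv] at key
  have h00 : (h 0).re = - ν (z - p) := by simp only [hh]; rw [hre, h0]
  rw [h00] at key
  have hp2 : 0 < - ν (z - p) := by linarith [hν z hz]
  rw [div_le_iff₀ (by positivity)]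
  have h5 : |ν v| ≤ ‖ℓ v‖ := by
    have := Complex.abs_re_le_norm (ℓ v)
    rwa [hre, abs_neg] at this
  refine h5.trans ?_
  rw [← hd, ℓ.map_smul, norm_smul]
  exact mul_le_mul_of_nonneg_left key (norm_nonneg ξ)

/-- Upper semicontinuity of the Kobayashi metric. -/
lemma kobMetric_usc {D : Set E} (hD : IsOpen D) (c : ℝ) :
    IsOpen {q : E × E | q.1 ∈ D ∧ kobMetric D q.1 q.2 < c} := by
  rw [Metric.isOpen_iff]
  rintro ⟨x, v⟩ ⟨hx, hk⟩
  simp only at hx hk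
  have hc : 0 < c := (kobMetric_nonneg D x v).trans_lt hk
  -- a competitor with nonzero ξ
  obtain ⟨f, ξ, hf, hm, h0, hd, hξ0, hξc⟩ : ∃ (f : ℂ → E) (ξ : ℂ),
      DifferentiableOn ℂ f (ball (0:ℂ) 1) ∧ MapsTo f (ball (0:ℂ) 1) D ∧
      f 0 = x ∧ ξ • deriv f 0 = v ∧ ξ ≠ 0 ∧ ‖ξ‖ < c := by
    obtain ⟨r, ⟨f, ξ, hf, hm, h0, hd, rfl⟩, hr⟩ := exists_lt_of_csInf_lt
      (kobMetric_set_nonempty hD hx v) hk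
    rw [derivWithin_ball_zero] at hd
    by_cases hξ : ξ = 0
    · refine ⟨fun _ => x, ((c/2 : ℝ) : ℂ), differentiableOn_const _, fun _ _ => hx, rfl, ?_, ?_, ?_⟩
      · rw [← hd, hξ]; simp
      · exact_mod_cast (half_pos hc).ne'
      · rw [Complex.norm_real, Real.norm_of_nonneg (by positivity)]; linarith
    · exact ⟨f, ξ, hf, hm, h0, hd, hξ, hr⟩
  have hξp : 0 < ‖ξ‖ := norm_pos_iff.2 hξ0
  obtain ⟨s, hs1, hs2⟩ := exists_between ((div_lt_one hc).2 hξc)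
  have hs0 : 0 < s := (by positivity : 0 < ‖ξ‖ / c).trans hs1
  have hcomp : IsCompact (f '' closedBall (0:ℂ) s) := by
    refine (isCompact_closedBall (0:ℂ) s).image_of_continuousOn ?_
    exact hf.continuousOn.mono (closedBall_subset_ball hs2)
  have hsub : f '' closedBall (0:ℂ) s ⊆ D := by
    rintro _ ⟨ζ, hζ, rfl⟩
    exact hm (closedBall_subset_ball hs2 hζ)
  obtain ⟨δ, hδ, hth⟩ := hcomp.exists_thickening_subset_open hD hsub
  refine ⟨min (δ/2) (δ * ‖ξ‖ / (2 * s)), by positivity, ?_⟩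
  rintro ⟨x', v'⟩ hq
  rw [mem_ball, Prod.dist_eq, max_lt_iff] at hq
  obtain ⟨hq1, hq2⟩ := hq
  simp only at hq1 hq2
  have hx' : ‖x' - x‖ < δ/2 := by
    rw [← dist_eq_norm]; exact hq1.trans_le (min_le_left _ _)
  have hv' : ‖v' - v‖ < δ * ‖ξ‖ / (2 * s) := by
    rw [← dist_eq_norm]; exact hq2.trans_le (min_le_right _ _)
  set e : E := ((s:ℂ) / ξ) • (v' - v) with he
  have hen : ‖e‖ < δ / 2 := by
    rw [he, norm_smul, norm_div, Complex.norm_real, Real.norm_of_nonneg hs0.le]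
    calc s / ‖ξ‖ * ‖v' - v‖ < s / ‖ξ‖ * (δ * ‖ξ‖ / (2 * s)) := by gcongr
      _ = δ / 2 := by field_simp
  set F : ℂ → E := fun ζ => x' + (f (s * ζ) - x) + ζ • e with hF
  have hsm : ∀ ζ ∈ ball (0:ℂ) 1, (s:ℂ) * ζ ∈ closedBall (0:ℂ) s := by
    intro ζ hζ
    have h3 : ‖ζ‖ < 1 := by simpa using hζ
    rw [mem_closedBall, dist_zero_right, norm_mul, Complex.norm_real, Real.norm_of_nonneg hs0.le]
    nlinarith
  have hFm : MapsTo F (ball (0:ℂ) 1) D := by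
    intro ζ hζ
    have h3 : ‖ζ‖ < 1 := by simpa using hζ
    apply hth
    rw [mem_thickening_iff]
    refine ⟨f (s * ζ), ⟨_, hsm ζ hζ, rfl⟩, ?_⟩
    rw [dist_eq_norm]
    have : F ζ - f (s * ζ) = (x' - x) + ζ • e := by simp only [hF]; abel
    rw [this]
    refine (norm_add_le _ _).trans_lt ?_
    rw [norm_smul]
    nlinarith [norm_nonneg e]
  have hfd : HasDerivAt f (deriv f 0) ((s:ℂ) * 0) := by
    rw [mul_zero]
    exact (hf.differentiableAt (isOpen_ball.mem_nhds (by simp))).hasDerivAt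
  have hFd : HasDerivAt F (((s:ℂ) * 1) • deriv f 0 + (1:ℂ) • e) 0 := by
    refine HasDerivAt.add (HasDerivAt.const_add _ (HasDerivAt.sub_const _ ?_)) ?_
    · exact hfd.scomp (0:ℂ) ((hasDerivAt_id (0:ℂ)).const_mul (s:ℂ))
    · exact (hasDerivAt_id (0:ℂ)).smul_const e
  have hF0 : F 0 = x' := by simp [hF, h0]
  have hx'D : x' ∈ D := by rw [← hF0]; exact hFm (by simp)
  refine ⟨hx'D, ?_⟩
  have hsne : (s:ℂ) ≠ 0 := by exact_mod_cast hs0.ne'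
  have key := kobMetric_le (D := D) (x := x') (v := v') (f := F) (ξ := ξ / s) ?_ hFm hF0 ?_
  · refine key.trans_lt ?_
    rw [norm_div, Complex.norm_real, Real.norm_of_nonneg hs0.le, div_lt_iff₀ hs0]
    rw [div_lt_iff₀ hc] at hs1
    linarith
  · have h1 : DifferentiableOn ℂ (fun ζ : ℂ => f (s * ζ)) (ball (0:ℂ) 1) := by
      refine hf.comp ((differentiable_id.const_mul (s:ℂ)).differentiableOn) ?_
      intro ζ hζ
      exact closedBall_subset_ball hs2 (hsm ζ hζ)
    exact ((h1.sub_const x).const_add x').add ((differentiable_id.smul_const e).differentiableOn)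
  · rw [hFd.deriv, mul_one, one_smul, smul_add, smul_smul, he, smul_smul,
      div_mul_cancel₀ _ hsne, hd]
    have : ξ / s * (s / ξ) = 1 := by field_simp
    rw [this, one_smul]
    abel

end KobMetric

section KobPaths

variable {E : Type*} [NormedAddCommGroup E] [NormedSpace ℂ E]

lemma IsACWithDeriv.continuousOn [CompleteSpace E] {σ g : ℝ → E} {a b : ℝ} (hab : a ≤ b)
    (h : IsACWithDeriv σ g a b) : ContinuousOn σ (Icc a b) := by
  have h1 : ContinuousOn (fun t => σ a + ∫ s in a..t, g s) (Icc a b) := by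
    have := intervalIntegral.continuousOn_primitive_interval (μ := volume) (f := g) (a := a) (b := b)
      (by
        rw [uIcc_of_le hab, integrableOn_Icc_iff_integrableOn_Ioc]
        exact (intervalIntegrable_iff_integrableOn_Ioc_of_le hab).1 h.1)
    rw [uIcc_of_le hab] at this
    exact continuousOn_const.add this
  exact h1.congr h.2

lemma kobMetric_intervalIntegrable [FiniteDimensional ℂ E] {D : Set E} (hD : IsOpen D)
    {σ g : ℝ → E} {a b : ℝ} (hab : a ≤ b)
    (h : IsACWithDeriv σ g a b) (hm : MapsTo σ (Icc a b) D) :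
    IntervalIntegrable (fun t => kobMetric D (σ t) (g t)) volume a b := by
  have : ProperSpace E := FiniteDimensional.proper ℂ E
  let : MeasurableSpace E := borel E
  have : BorelSpace E := ⟨rfl⟩
  have hσ := h.continuousOn hab
  have hg := (intervalIntegrable_iff_integrableOn_Ioc_of_le hab).1 h.1
  rw [intervalIntegrable_iff_integrableOn_Ioc_of_le hab]
  classical
  set k' : E × E → ℝ := fun q => if q.1 ∈ D then kobMetric D q.1 q.2 else 0 with hk'
  have hk'm : Measurable k' := by
    apply measurable_of_Iio
    intro c
    by_cases hc : 0 < c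
    · have : k' ⁻¹' Iio c = {q : E × E | q.1 ∈ D ∧ kobMetric D q.1 q.2 < c} ∪ {q | q.1 ∈ D}ᶜ := by
        ext q
        simp only [hk', mem_preimage, mem_Iio, mem_union, mem_compl_iff, mem_ofPred_eq]
        by_cases hq : q.1 ∈ D
        · simp [hq]
        · simp [hq, hc]
      rw [this]
      exact (kobMetric_usc hD c).measurableSet.union
        (hD.preimage continuous_fst).measurableSet.compl
    · have : k' ⁻¹' Iio c = ∅ := by
        ext q
        simp only [hk', mem_preimage, mem_Iio, mem_empty_iff_false, iff_false, not_lt]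
        split_ifs
        · exact (not_lt.1 hc).trans (kobMetric_nonneg _ _ _)
        · exact not_lt.1 hc
      rw [this]; exact MeasurableSet.empty
  have hσm : AEMeasurable σ (volume.restrict (Ioc a b)) :=
    (hσ.mono Ioc_subset_Icc_self).aemeasurable measurableSet_Ioc
  have hgm : AEMeasurable g (volume.restrict (Ioc a b)) := hg.aestronglyMeasurable.aemeasurable
  have hmeas : AEStronglyMeasurable (fun t => kobMetric D (σ t) (g t)) (volume.restrict (Ioc a b)) := by
    have h1 : AEMeasurable (fun t => k' (σ t, g t)) (volume.restrict (Ioc a b)) :=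
      hk'm.comp_aemeasurable (hσm.prodMk hgm)
    refine h1.aestronglyMeasurable.congr ?_
    rw [EventuallyEq, ae_restrict_iff' measurableSet_Ioc]
    refine Eventually.of_forall fun t ht => ?_
    simp only [hk', hm (Ioc_subset_Icc_self ht), if_true]
  have hcomp : IsCompact (σ '' Icc a b) := isCompact_Icc.image_of_continuousOn hσ
  obtain ⟨δ, hδ, hth⟩ := hcomp.exists_thickening_subset_open hD (by
    rintro _ ⟨t, ht, rfl⟩; exact hm ht)
  refine Integrable.mono' (hg.norm.div_const δ) hmeas ?_
  rw [ae_restrict_iff' measurableSet_Ioc]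
  refine Eventually.of_forall fun t ht => ?_
  rw [Real.norm_of_nonneg (kobMetric_nonneg _ _ _)]
  refine kobMetric_le_of_ball hδ ?_ _
  exact (ball_subset_thickening (mem_image_of_mem σ (Ioc_subset_Icc_self ht)) δ).trans hth

/-- There is a curve from `x` to `y` of Kobayashi length at most `r`. -/
def HasPath (D : Set E) (x y : E) (r : ℝ) : Prop :=
  ∃ (a b : ℝ) (σ g : ℝ → E), a ≤ b ∧
    IsACWithDeriv σ g a b ∧ MapsTo σ (Icc a b) D ∧ σ a = x ∧ σ b = y ∧
    ∫ t in a..b, kobMetric D (σ t) (g t) ≤ r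

lemma kobDist_le_of_hasPath {D : Set E} {x y : E} {r : ℝ} (h : HasPath D x y r) :
    kobDist D x y ≤ r := by
  obtain ⟨a, b, σ, g, hab, h1, h2, h3, h4, h5⟩ := h
  unfold kobDist
  refine le_trans (csInf_le ?_ (Exists.intro a ⟨b, σ, g, hab, h1, h2, h3, h4, rfl⟩)) h5
  refine ⟨0, ?_⟩
  rintro _ ⟨a, b, σ, g, hab, -, -, -, -, rfl⟩
  exact intervalIntegral.integral_nonneg hab (fun t _ => kobMetric_nonneg _ _ _)

/-- Straight segments. -/
lemma hasPath_segment [CompleteSpace E] {D : Set E} {p v : E} {a b : ℝ} {B : ℝ → ℝ} (hab : a ≤ b)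
    (hD : ∀ t ∈ Icc a b, p + (t:ℂ) • v ∈ D)
    (hB : ∀ t ∈ Icc a b, kobMetric D (p + (t:ℂ) • v) v ≤ B t)
    (hBi : IntegrableOn B (Ioc a b)) :
    HasPath D (p + (a:ℂ) • v) (p + (b:ℂ) • v) (∫ t in Ioc a b, B t) := by
  refine ⟨a, b, fun t => p + (t:ℂ) • v, fun _ => v, hab, ⟨by simp, ?_⟩, hD, rfl, rfl, ?_⟩
  · intro t ht
    change p + (t:ℂ) • v = p + (a:ℂ) • v + ∫ _ in a..t, v
    rw [intervalIntegral.integral_const, add_assoc, ← Complex.coe_smul, ← add_smul]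
    congr 2
    push_cast; ring
  · rw [intervalIntegral.integral_of_le hab]
    refine integral_mono_of_nonneg ?_ hBi ?_
    · exact Eventually.of_forall (fun t => kobMetric_nonneg _ _ _)
    · rw [EventuallyLE, ae_restrict_iff' measurableSet_Ioc]
      exact Eventually.of_forall fun t ht => hB t (Ioc_subset_Icc_self ht)

lemma HasPath.trans [CompleteSpace E] {D : Set E} {x y z : E} {r s : ℝ} (h1 : HasPath D x y r)
    (h2 : HasPath D y z s) : HasPath D x z (r + s) := by
  obtain ⟨a, b, σ, g, hab, ⟨hg, hσ⟩, hm, ha, hb, hr⟩ := h1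
  obtain ⟨c, d, τ, k, hcd, ⟨hk, hτ⟩, hm', hc, hd, hs⟩ := h2
  set e := b + (d - c) with he
  have hbe : b ≤ e := by linarith
  set G : ℝ → E := fun t => if t ≤ b then g t else k (t - (b - c)) with hG
  set S : ℝ → E := fun t => if t ≤ b then σ t else τ (t - (b - c)) with hS
  have hGk : IntervalIntegrable (fun t => k (t - (b - c))) volume b e := by
    have := hk.comp_sub_right (b - c)
    convert this using 1
    · ring
    · rw [he]; ring
  have hG1 : ∀ t ∈ Icc a b, IntervalIntegrable G volume a t ∧ ∫ s in a..t, G s = ∫ s in a..t, g s := by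
    intro t ht
    have hgt : IntervalIntegrable g volume a t := hg.mono_set (by
      rw [uIcc_of_le ht.1, uIcc_of_le hab]; exact Icc_subset_Icc_right ht.2)
    constructor
    · refine hgt.congr ?_
      intro s hs
      rw [uIoc_of_le ht.1] at hs
      simp only [hG, if_pos (hs.2.trans ht.2)]
    · apply intervalIntegral.integral_congr_ae
      refine Eventually.of_forall fun s hs => ?_
      rw [uIoc_of_le ht.1] at hs
      simp only [hG, if_pos (hs.2.trans ht.2)]
  have hG2 : ∀ t ∈ Icc b e, IntervalIntegrable G volume b t ∧
      ∫ s in b..t, G s = ∫ s in c..(t - (b - c)), k s := by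
    intro t ht
    have hkt : IntervalIntegrable (fun t => k (t - (b - c))) volume b t := hGk.mono_set (by
      rw [uIcc_of_le ht.1, uIcc_of_le hbe]; exact Icc_subset_Icc_right ht.2)
    constructor
    · refine hkt.congr ?_
      intro s hs
      rw [uIoc_of_le ht.1] at hs
      simp only [hG, if_neg (not_le.2 hs.1)]
    · have h3 : ∫ s in b..t, G s = ∫ s in b..t, k (s - (b - c)) := by
        apply intervalIntegral.integral_congr_ae
        refine Eventually.of_forall fun s hs => ?_
        rw [uIoc_of_le ht.1] at hs
        simp only [hG, if_neg (not_le.2 hs.1)]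
      rw [h3, intervalIntegral.integral_comp_sub_right]
      congr 1; ring
  have hSa : S a = σ a := by simp only [hS, if_pos hab]
  refine ⟨a, e, S, G, hab.trans hbe, ⟨(hG1 b ⟨hab, le_rfl⟩).1.trans (hG2 e ⟨hbe, le_rfl⟩).1, ?_⟩,
    ?_, ?_, ?_, ?_⟩
  · intro t ht
    rw [hSa]
    by_cases htb : t ≤ b
    · rw [(hG1 t ⟨ht.1, htb⟩).2, ← hσ t ⟨ht.1, htb⟩]
      simp only [hS, if_pos htb]
    · push Not at htb
      have ht' : t ∈ Icc b e := ⟨htb.le, ht.2⟩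
      rw [← intervalIntegral.integral_add_adjacent_intervals (hG1 b ⟨hab, le_rfl⟩).1 (hG2 t ht').1,
        (hG1 b ⟨hab, le_rfl⟩).2, (hG2 t ht').2, ← add_assoc, ← hσ b ⟨hab, le_rfl⟩, hb, ← hc,
        ← hτ (t - (b - c)) ⟨by linarith, by linarith [ht.2]⟩]
      simp only [hS, if_neg (not_le.2 htb)]
  · intro t ht
    by_cases htb : t ≤ b
    · simp only [hS, if_pos htb]; exact hm ⟨ht.1, htb⟩
    · simp only [hS, if_neg htb]
      push Not at htb
      exact hm' ⟨by linarith, by linarith [ht.2]⟩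
  · rw [hSa, ha]
  · by_cases heb : e ≤ b
    · have h5 : e = b := le_antisymm heb hbe
      have h6 : d = c := by linarith
      simp only [hS, if_pos heb]
      rw [h5, hb, ← hc, ← hd, h6]
    · simp only [hS, if_neg heb]
      rw [← hd]; congr 1; linarith
  · set K : ℝ → ℝ := fun t => kobMetric D (S t) (G t) with hK
    have e1 : ∫ t in a..b, K t = ∫ t in a..b, kobMetric D (σ t) (g t) := by
      apply intervalIntegral.integral_congr_ae
      refine Eventually.of_forall fun s hs => ?_
      rw [uIoc_of_le hab] at hs
      simp only [hK, hS, hG, if_pos hs.2]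
    have e2 : ∫ t in b..e, K t = ∫ t in c..d, kobMetric D (τ t) (k t) := by
      have h3 : ∫ t in b..e, K t =
          ∫ t in b..e, (fun u => kobMetric D (τ u) (k u)) (t - (b - c)) := by
        apply intervalIntegral.integral_congr_ae
        refine Eventually.of_forall fun s hs => ?_
        rw [uIoc_of_le hbe] at hs
        simp only [hK, hS, hG, if_neg (not_le.2 hs.1)]
      rw [h3, intervalIntegral.integral_comp_sub_right (fun u => kobMetric D (τ u) (k u)) (b - c)]
      congr 1
      · ring
      · rw [he]; ring
    by_cases hKi : IntervalIntegrable K volume a e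
    · have i1 : IntervalIntegrable K volume a b := hKi.mono_set (by
        rw [uIcc_of_le hab, uIcc_of_le (hab.trans hbe)]; exact Icc_subset_Icc_right hbe)
      have i2 : IntervalIntegrable K volume b e := hKi.mono_set (by
        rw [uIcc_of_le hbe, uIcc_of_le (hab.trans hbe)]; exact Icc_subset_Icc_left hab)
      rw [← intervalIntegral.integral_add_adjacent_intervals i1 i2, e1, e2]
      linarith
    · rw [intervalIntegral.integral_undef hKi]
      have n1 : 0 ≤ ∫ t in a..b, kobMetric D (σ t) (g t) :=
        intervalIntegral.integral_nonneg hab (fun t _ => kobMetric_nonneg _ _ _)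
      have n2 : 0 ≤ ∫ t in c..d, kobMetric D (τ t) (k t) :=
        intervalIntegral.integral_nonneg hcd (fun t _ => kobMetric_nonneg _ _ _)
      linarith

lemma kobMetric_neg (D : Set E) (x v : E) : kobMetric D x (-v) = kobMetric D x v := by
  have key : ∀ v : E, { r : ℝ | ∃ (f : ℂ → E) (ξ : ℂ),
      DifferentiableOn ℂ f (ball (0:ℂ) 1) ∧ MapsTo f (ball (0:ℂ) 1) D ∧
      f 0 = x ∧ ξ • derivWithin f (ball (0:ℂ) 1) 0 = v ∧ r = ‖ξ‖ } ⊆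
      { r : ℝ | ∃ (f : ℂ → E) (ξ : ℂ),
      DifferentiableOn ℂ f (ball (0:ℂ) 1) ∧ MapsTo f (ball (0:ℂ) 1) D ∧
      f 0 = x ∧ ξ • derivWithin f (ball (0:ℂ) 1) 0 = -v ∧ r = ‖ξ‖ } := by
    rintro v r ⟨f, ξ, hf, hm, h0, hd, hr⟩
    exact ⟨f, -ξ, hf, hm, h0, by rw [neg_smul, hd], by rw [norm_neg, hr]⟩
  unfold kobMetric
  congr 1
  refine Subset.antisymm ?_ (key v)
  have := key (-v)
  rwa [neg_neg] at this

lemma HasPath.symm {D : Set E} {x y : E} {r : ℝ} (h : HasPath D x y r) : HasPath D y x r := by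
  obtain ⟨a, b, σ, g, hab, ⟨hg, hσ⟩, hm, ha, hb, hr⟩ := h
  refine ⟨-b, -a, fun t => σ (-t), fun t => - g (-t), by linarith, ⟨?_, ?_⟩, ?_, by simpa using hb,
    by simpa using ha, ?_⟩
  · exact ((IntervalIntegrable.iff_comp_neg (f := g)).1 hg).symm.neg
  · intro t ht
    change σ (-t) = σ (- -b) + ∫ s in (-b)..t, - g (-s)
    have ht' : -t ∈ Icc a b := ⟨by linarith [ht.2], by linarith [ht.1]⟩
    have i1 : IntervalIntegrable g volume a (-t) := hg.mono_set (by
      rw [uIcc_of_le ht'.1, uIcc_of_le hab]; exact Icc_subset_Icc_right ht'.2)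
    have i2 : IntervalIntegrable g volume (-t) b := hg.mono_set (by
      rw [uIcc_of_le ht'.2, uIcc_of_le hab]; exact Icc_subset_Icc_left ht'.1)
    rw [intervalIntegral.integral_neg, intervalIntegral.integral_comp_neg (fun s => g s), neg_neg,
      hσ b ⟨hab, le_rfl⟩, hσ (-t) ht', ← intervalIntegral.integral_add_adjacent_intervals i1 i2]
    abel
  · intro t ht
    exact hm ⟨by linarith [ht.2], by linarith [ht.1]⟩
  · have : ∫ t in (-b)..(-a), kobMetric D (σ (-t)) (- g (-t)) =
        ∫ t in a..b, kobMetric D (σ t) (g t) := by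
      simp_rw [kobMetric_neg]
      rw [intervalIntegral.integral_comp_neg (fun s => kobMetric D (σ s) (g s))]
      simp
    rw [this]
    exact hr

/-- Lower bound for the Kobayashi distance via a supporting half space. -/
lemma kobDist_lower [FiniteDimensional ℂ E] {D : Set E} (hD : IsOpen D) (hconv : Convex ℝ D)
    {p : E} (ν : E →L[ℝ] ℝ) (hν : ∀ z ∈ D, ν (z - p) < 0) {x y : E} (hx : x ∈ D) (hy : y ∈ D) :
    |Real.log (- ν (y - p)) - Real.log (- ν (x - p))| / 2 ≤ kobDist D x y := by
  have : CompleteSpace E := FiniteDimensional.complete ℂ E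
  refine le_csInf ?_ ?_
  · refine ⟨_, 0, 1, fun t => x + t • (y - x), fun _ => y - x, zero_le_one, ⟨by simp, ?_⟩, ?_, by simp,
      by simp, rfl⟩
    · intro t ht
      rw [intervalIntegral.integral_const]
      simp
    · intro t ht
      exact hconv.add_smul_sub_mem hx hy ht
  · rintro r ⟨a, b, σ, g, hab, hac, hm, ha, hb, rfl⟩
    have hki := kobMetric_intervalIntegrable hD hab hac hm
    set u : ℝ → ℝ := fun t => - ν (σ t - p) with hu
    have hgi : IntervalIntegrable (fun t => - ν (g t)) volume a b := by
      have := hac.1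
      rw [intervalIntegrable_iff_integrableOn_Ioc_of_le hab] at this ⊢
      exact (ν.integrable_comp this).neg
    have hupos : ∀ t ∈ Icc a b, 0 < u t := fun t ht => by
      simp only [hu]; linarith [hν _ (hm ht)]
    obtain ⟨h1, h2⟩ := log_ftc (u := u) hab hgi (by
      intro t ht
      have hgt : IntervalIntegrable g volume a t := hac.1.mono_set (by
        rw [uIcc_of_le ht.1, uIcc_of_le hab]; exact Icc_subset_Icc_right ht.2)
      simp only [hu]
      rw [intervalIntegral.integral_neg, ν.intervalIntegral_comp_comm hgt, hac.2 t ht]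
      simp only [map_sub, map_add]
      ring) hupos
    have hkey : ∀ t ∈ Icc a b, |(- ν (g t)) / u t| ≤ 2 * kobMetric D (σ t) (g t) := by
      intro t ht
      have := kobMetric_lower hD ν hν (hm ht) (g t)
      have h3 : |ν (g t)| / (2 * (- ν (σ t - p))) = |(- ν (g t)) / u t| / 2 := by
        rw [abs_div, abs_neg, abs_of_pos (hupos t ht)]
        simp only [hu]
        rw [mul_comm, div_div]
      rw [h3] at this
      linarith
    have hub : u b = - ν (y - p) := by simp only [hu, hb]
    have hua : u a = - ν (x - p) := by simp only [hu, ha]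
    rw [← hub, ← hua, ← h2]
    have h4 : |∫ t in a..b, (- ν (g t)) / u t| ≤ ∫ t in a..b, |(- ν (g t)) / u t| :=
      intervalIntegral.abs_integral_le_integral_abs hab
    have h5 : ∫ t in a..b, |(- ν (g t)) / u t| ≤ ∫ t in a..b, 2 * kobMetric D (σ t) (g t) :=
      intervalIntegral.integral_mono_on hab h1.abs (hki.const_mul 2) hkey
    rw [intervalIntegral.integral_const_mul] at h5
    linarith

end KobPaths

section Geometry

variable {E : Type*} [NormedAddCommGroup E] [NormedSpace ℂ E]

lemma subset_of_disjoint_frontier {X : Type*} [TopologicalSpace X] {S D : Set X}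
    (hS : IsPreconnected S) (hD : IsOpen D) (hfr : ∀ q ∈ S, q ∉ frontier D)
    {x : X} (hxS : x ∈ S) (hxD : x ∈ D) : S ⊆ D := by
  refine hS.subset_left_of_subset_union (v := (closure D)ᶜ) hD isClosed_closure.isOpen_compl ?_ ?_
    ⟨x, hxS, hxD⟩
  · exact Set.disjoint_left.2 fun z hz hz' => hz' (subset_closure hz)
  · intro q hq
    by_cases h : q ∈ closure D
    · left
      by_contra h'
      exact hfr q hq ⟨h, by rwa [hD.interior_eq]⟩
    · right; exact h

lemma nu_slice {ν : E →L[ℝ] ℝ} {n : E} (hν : ‖ν‖ = 1) (hn : ‖n‖ = 1) (h : ν n = -1) (ζ : ℂ) :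
    ν (ζ • n) = - ζ.re := by
  have hdec : ∀ ζ : ℂ, ν (ζ • n) = - ζ.re + ζ.im * ν (Complex.I • n) := by
    intro ζ
    have : ζ • n = ζ.re • n + ζ.im • (Complex.I • n) := by
      conv_lhs => rw [← Complex.re_add_im ζ]
      rw [add_smul, mul_smul, Complex.coe_smul, Complex.coe_smul]
    rw [this, map_add, map_smul, map_smul, h]
    simp
  set β := ν (Complex.I • n) with hβ
  have hb : β = 0 := by
    have h1 := ν.le_opNorm ((-1 + β * Complex.I : ℂ) • n)
    rw [hν, norm_smul, hn, hdec, one_mul, mul_one] at h1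
    simp only [Complex.add_re, Complex.neg_re, Complex.one_re, Complex.mul_re, Complex.ofReal_re,
      Complex.I_re, mul_zero, Complex.ofReal_im, Complex.I_im, mul_one, Complex.add_im,
      Complex.neg_im, Complex.one_im, Complex.mul_im, sub_self, add_zero, neg_neg, neg_zero, zero_add]
      at h1
    have h2 : ‖(-1 + β * Complex.I : ℂ)‖^2 = 1 + β^2 := by
      rw [← Complex.normSq_eq_norm_sq, Complex.normSq_apply]
      simp; ring
    have h3 : (1 + β * β)^2 ≤ 1 + β^2 := by
      rw [← h2, ← sq_abs]
      gcongr
      exact h1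
    have : β^2 ≤ 0 := by nlinarith [sq_nonneg (β * β), sq_nonneg β]
    exact pow_eq_zero_iff (two_ne_zero) |>.1 (le_antisymm this (sq_nonneg _))
  rw [hdec, hb]; simp

/-- A supporting functional of norm one is quantitatively negative. -/
lemma nu_ball {D : Set E} {ν : E →L[ℝ] ℝ} (hν : ‖ν‖ = 1) {q : E}
    (hs : ∀ z ∈ D, ν (z - q) ≤ 0) {z : E} {r : ℝ} (hr : 0 < r) (hb : ball z r ⊆ D) :
    ν (z - q) ≤ - r := by
  by_contra hcon
  push Not at hcon
  set M := - ν (z - q) with hM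
  have hMr : M / r < ‖ν‖ := by rw [hν, div_lt_one hr]; linarith
  obtain ⟨w, hw, hlt⟩ := ν.exists_lt_apply_of_lt_opNorm hMr
  rw [div_lt_iff₀ hr, Real.norm_eq_abs] at hlt
  have hmem : ∀ s : ℝ, |s| = r → z + s • w ∈ D := by
    intro s hs
    apply hb
    rw [mem_ball, dist_eq_norm, add_sub_cancel_left, norm_smul, Real.norm_eq_abs, hs]
    nlinarith
  have h1 := hs _ (hmem r (abs_of_pos hr))
  have h2 := hs _ (hmem (-r) (by rw [abs_neg, abs_of_pos hr]))
  have e1 : z + r • w - q = (z - q) + r • w := by abel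
  have e2 : z + (-r) • w - q = (z - q) + (-r) • w := by abel
  rw [e1, map_add, map_smul, smul_eq_mul] at h1
  rw [e2, map_add, map_smul, smul_eq_mul] at h2
  rcases abs_cases (ν w) with ⟨h, -⟩ | ⟨h, -⟩
  · rw [h] at hlt; linarith
  · rw [h] at hlt; linarith

lemma supporting {D W : Set E} {ξ : E} {ρ : E → ℝ} (hD : IsOpen D) (hconv : Convex ℝ D)
    (h : IsLocalDefiningFn D ξ W ρ) {q : E} (hq : q ∈ frontier D) (hqW : q ∈ W) {z : E}
    (hz : z ∈ D) : fderiv ℝ ρ q (z - q) ≤ 0 := by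
  obtain ⟨hW, -, hc, -, hDW, hfW⟩ := h
  have hd : HasFDerivAt ρ (fderiv ℝ ρ q) q :=
    ((hc.differentiableOn (by norm_num)).differentiableAt (hW.mem_nhds hqW)).hasFDerivAt
  have hρq : ρ q = 0 := by
    have : q ∈ frontier D ∩ W := ⟨hq, hqW⟩
    rw [hfW] at this
    exact this.2
  have hline : HasDerivAt (fun t : ℝ => q + t • (z - q)) ((1:ℝ) • (z - q)) 0 :=
    ((hasDerivAt_id (0:ℝ)).smul_const (z - q)).const_add q
  have hφ : HasDerivAt (fun t : ℝ => ρ (q + t • (z - q))) (fderiv ℝ ρ q ((1:ℝ) • (z - q))) 0 := by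
    refine HasFDerivAt.comp_hasDerivAt (0:ℝ) (f := fun t : ℝ => q + t • (z - q)) ?_ hline
    simpa using hd
  rw [one_smul] at hφ
  have ht := hφ.tendsto_slope_zero_right
  refine le_of_tendsto ht ?_
  have hWev : ∀ᶠ t : ℝ in 𝓝[>] 0, q + t • (z - q) ∈ W := by
    have : Tendsto (fun t : ℝ => q + t • (z - q)) (𝓝[>] 0) (𝓝 q) := by
      have := hline.continuousAt.tendsto.mono_left (nhdsWithin_le_nhds (s := Ioi (0:ℝ)))
      simpa using this
    exact this.eventually (hW.mem_nhds hqW)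
  have h1 : ∀ᶠ t : ℝ in 𝓝[>] 0, t < 1 := by
    filter_upwards [Ioo_mem_nhdsGT (zero_lt_one (α := ℝ))] with t ht using ht.2
  filter_upwards [hWev, h1, self_mem_nhdsWithin] with t htW ht1 ht0
  have ht0' : 0 < t := ht0
  have hin : q + t • (z - q) ∈ D := by
    have := hconv.add_smul_sub_mem_interior' (x := q) (y := z) hq.1
      (by rwa [hD.interior_eq]) (t := t) ⟨ht0', ht1.le⟩
    rwa [hD.interior_eq] at this
  have hneg : ρ (q + t • (z - q)) < 0 := by
    have : q + t • (z - q) ∈ D ∩ W := ⟨hin, htW⟩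
    rw [hDW] at this
    exact this.2
  simp only [zero_add, zero_smul, add_zero, hρq, sub_zero, smul_eq_mul]
  exact mul_nonpos_of_nonneg_of_nonpos (inv_nonneg.2 ht0'.le) hneg.le

lemma disc_bound {t W : ℝ} (ht : 0 < t) (hW : 0 < W) (h : t * W ≤ 1/4) :
    (1/(2*W) - 2*t^2*W) / ((1/(2*W) - 2*t^2*W)^2 - (t - 1/(2*W))^2) ≤ 1/(2*t) + 3 * W := by
  obtain ⟨w, hw⟩ : ∃ w, w = t * W := ⟨_, rfl⟩
  have hw0 : 0 < w := by rw [hw]; positivity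
  rw [← hw] at h
  have hWe : W = w / t := by rw [hw]; field_simp
  subst hWe
  have e1 : 1/(2*(w/t)) - 2*t^2*(w/t) = t * (1 - 4*w^2) / (2*w) := by field_simp; ring
  have e2 : (1/(2*(w/t)) - 2*t^2*(w/t))^2 - (t - 1/(2*(w/t)))^2 =
      t^2 * ((1 - 2*w)^2 * (1 + w)) / w := by field_simp; ring
  have hp : 0 < 1 - 2 * w := by linarith
  rw [e2, e1, div_le_iff₀ (by positivity)]
  have e3 : (1/(2*t) + 3*(w/t)) * (t^2 * ((1 - 2*w)^2 * (1 + w)) / w) =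
      t * ((1 + 6*w) * ((1 - 2*w)^2 * (1 + w))) / (2*w) := by field_simp; ring
  rw [e3]
  gcongr
  have : 1 + 2*w ≤ (1 + 6*w) * ((1 - 2*w) * (1 + w)) := by nlinarith [sq_nonneg w]
  nlinarith

lemma re_bound {c V a m x : ℝ} (hcV : c * V = 1/2) (hc : 0 < c) (ha : 0 < a) (hac : a ≤ c)
    (h : m^2 - 2 * c * x + c^2 < (c - a)^2) : m^2 * V + a/2 < x := by
  have e1 : 2 * c * (m^2 * V) = m^2 := by linear_combination 2 * m^2 * hcV
  have e2 := mul_le_mul_of_nonneg_right hac ha.le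
  have h3 : 2 * c * (m^2 * V + a/2) < 2 * c * x := by
    ring_nf at h e1 e2 ⊢
    linarith only [h, e1, e2]
  exact lt_of_mul_lt_mul_left h3 (by positivity)

set_option maxHeartbeats 4000000 in
/-- The local climbing lemma: from a point close to `ξ` one can climb to depth `ε` with the optimal
cost `½ log (ε / δ)` up to a constant independent of `ε`. -/
lemma climb [FiniteDimensional ℂ E] {D : Set E} (hD : IsOpen D) (hconv : Convex ℝ D) {ξ : E}
    (hξ : ξ ∈ frontier D) (hdini : DiniSmoothBoundaryPoint D ξ) :
    ∃ (r C : ℝ), 0 < r ∧ ∀ ε, 0 < ε → ε ≤ r → ∀ x ∈ D, ‖x - ξ‖ < ε / 2 →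
      ∃ (δ : ℝ) (p : E), 0 < δ ∧ HasPath D x p (Real.log (ε / δ) / 2 + C) ∧
        ball p (ε/4) ⊆ D ∧ ‖p - x‖ ≤ ε ∧
        ∀ z ∈ D, ∀ d, 0 < d → ball z d ⊆ D →
          Real.log (d / δ) / 2 ≤ kobDist D x z ∧ Real.log (d / δ) / 2 ≤ kobDist D z x := by
  have hprop : ProperSpace E := FiniteDimensional.proper ℂ E
  have hcompl : CompleteSpace E := FiniteDimensional.complete ℂ E
  obtain ⟨W, ρ, ω, hdef, hω0, hωm, hωi, hlipW⟩ := hdini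
  obtain ⟨R, hR, hRW⟩ := Metric.isOpen_iff.1 hdef.1 ξ hdef.2.1
  set ν : E → (E →L[ℝ] ℝ) := fun q => (‖fderiv ℝ ρ q‖)⁻¹ • fderiv ℝ ρ q with hνdef
  have hν1 : ∀ q ∈ W, ‖ν q‖ = 1 := by
    intro q hq
    have := norm_ne_zero_iff.2 (hdef.2.2.2.1 q hq)
    simp only [hνdef]
    rw [norm_smul, norm_inv, norm_norm, inv_mul_cancel₀ this]
  have hνs : ∀ q ∈ frontier D, q ∈ W → ∀ z ∈ D, ν q (z - q) ≤ 0 := by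
    intro q hq hqW z hz
    have := supporting hD hconv hdef hq hqW hz
    simp only [hνdef]
    rw [smul_apply, smul_eq_mul]
    exact mul_nonpos_of_nonneg_of_nonpos (by positivity) this
  -- by continuity, also on the closure
  have hνc : ∀ q ∈ frontier D, q ∈ W → ∀ z ∈ closure D, ν q (z - q) ≤ 0 := by
    intro q hq hqW z hz
    have hcl : IsClosed {z | ν q (z - q) ≤ 0} :=
      isClosed_le ((ν q).continuous.comp (continuous_id.sub continuous_const)) continuous_const
    exact closure_minimal (fun z hz => hνs q hq hqW z hz) hcl hz
  set r₀ : ℝ := min (R/2) (1/2) with hr₀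
  have hr₀p : 0 < r₀ := by positivity
  have hr₀1 : r₀ ≤ 1/2 := min_le_right _ _
  have hr₀R : r₀ ≤ R/2 := min_le_left _ _
  obtain ⟨V, r₁, hr₁, hr₁₀, hVi, hV⟩ := dini_majorant hω0 hωm hωi hr₀p hr₀1
  refine ⟨min r₁ (r₀/2), 3 * ∫ t in Ioc (0:ℝ) 1, |V t|, by positivity, ?_⟩
  intro ε hε hεr x hx hxξ
  have hε1 : ε ≤ r₁ := hεr.trans (min_le_left _ _)
  have hε2 : ε ≤ r₀/2 := hεr.trans (min_le_right _ _)
  obtain ⟨o, ho, hod⟩ := isClosed_frontier.exists_infDist_eq_dist ⟨ξ, hξ⟩ x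
  set δ := infDist x (frontier D) with hδ
  have hδx : ∀ q ∈ frontier D, δ ≤ dist x q := fun q hq => infDist_le_dist_of_mem hq
  have hδ0 : 0 < δ := by
    rw [hod, dist_pos]
    rintro rfl
    rw [hD.frontier_eq] at ho
    exact ho.2 hx
  have hδε : δ < ε / 2 := (hδx ξ hξ).trans_lt (by rw [dist_eq_norm]; exact hxξ)
  have hoξ : dist o ξ < ε := by
    have := dist_triangle_left o ξ x
    rw [← hod] at this
    rw [dist_eq_norm x ξ] at this
    linarith
  have hballx : ball x δ ⊆ D := by
    refine subset_of_disjoint_frontier (convex_ball x δ).isPreconnected hD ?_ (mem_ball_self hδ0) hx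
    intro q hq hq'
    rw [mem_ball, dist_comm] at hq
    linarith [hδx q hq']
  have hoW : o ∈ W := hRW (by rw [mem_ball]; linarith)
  set μ := ν o with hμ
  have hμ1 : ‖μ‖ = 1 := hν1 o hoW
  -- the key estimate
  have hkey : ∀ q ∈ frontier D, ‖q - o‖ ≤ r₀ → - μ (q - o) ≤ ω ‖q - o‖ * ‖q - o‖ := by
    intro q hq hqo
    have hqW : q ∈ W := hRW (by
      rw [mem_ball]
      have := dist_triangle q o ξ
      rw [dist_eq_norm q o] at this
      linarith)
    have h1 := hνc q hq hqW o ho.1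
    have h2 := hlipW q ⟨hq, hqW⟩ o ⟨ho, hoW⟩ (by linarith)
    have h3 := (ν q - μ).le_opNorm (q - o)
    have h4 : ‖ν q - μ‖ * ‖q - o‖ ≤ ω ‖q - o‖ * ‖q - o‖ := by
      gcongr
    have h5 := (le_abs_self _).trans (h3.trans h4)
    rw [_root_.sub_apply] at h5
    have h6 : ν q (o - q) = - ν q (q - o) := by rw [← map_neg, neg_sub]
    linarith
  set n : E := ((δ⁻¹ : ℝ) : ℂ) • (x - o) with hn
  have hxo : ‖x - o‖ = δ := by rw [← dist_eq_norm, ← hod]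
  have hn1 : ‖n‖ = 1 := by
    rw [hn, norm_smul, Complex.norm_real, hxo, Real.norm_of_nonneg (by positivity),
      inv_mul_cancel₀ hδ0.ne']
  have hxn : x = o + (δ:ℂ) • n := by
    rw [hn, smul_smul, ← Complex.ofReal_mul, mul_inv_cancel₀ hδ0.ne']
    simp
  have hμn : μ n = -1 := by
    have h1 := nu_ball hμ1 (hνs o ho hoW) hδ0 hballx
    have h2 : x - o = δ • n := by
      rw [← Complex.coe_smul]
      nth_rewrite 1 [hxn]
      abel
    rw [h2, map_smul, smul_eq_mul] at h1
    have h3 : μ n ≤ -1 := by nlinarith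
    have h4 := μ.le_opNorm n
    rw [hμ1, hn1, Real.norm_eq_abs] at h4
    have := neg_abs_le (μ n)
    linarith
  have hslice := fun ζ : ℂ => nu_slice hμ1 hn1 hμn ζ
  have hfree : ∀ ζ : ℂ, ‖ζ‖ ≤ r₀ → ω ‖ζ‖ * ‖ζ‖ < ζ.re → o + ζ • n ∉ frontier D := by
    intro ζ hζ hlt hfr
    have hno : ‖o + ζ • n - o‖ = ‖ζ‖ := by rw [add_sub_cancel_left, norm_smul, hn1, mul_one]
    have := hkey _ hfr (by rw [hno]; exact hζ)
    rw [hno, add_sub_cancel_left, hslice] at this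
    linarith
  have hωt : ∀ t, 0 < t → t ≤ ε → ω t ≤ t * V t := fun t ht hte =>
    (hV t ht (hte.trans hε1)).2.2 t le_rfl (by linarith)
  -- the real segment
  have hseg : ∀ t : ℝ, 0 < t → t ≤ ε → o + (t:ℂ) • n ∈ D := by
    have himg : IsPreconnected ((fun t : ℝ => o + (t:ℂ) • n) '' Ioc 0 ε) := by
      refine isPreconnected_Ioc.image _ (Continuous.continuousOn ?_)
      fun_prop
    have hxmem : x ∈ (fun t : ℝ => o + (t:ℂ) • n) '' Ioc 0 ε :=
      ⟨δ, ⟨hδ0, by linarith⟩, hxn.symm⟩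
    have hsub := subset_of_disjoint_frontier himg hD ?_ hxmem hx
    · intro t ht hte
      exact hsub ⟨t, ⟨ht, hte⟩, rfl⟩
    · rintro _ ⟨t, ⟨ht, hte⟩, rfl⟩
      have hnt : ‖(t:ℂ)‖ = t := by rw [Complex.norm_real, Real.norm_of_nonneg ht.le]
      refine hfree _ (by rw [hnt]; linarith) ?_
      rw [hnt, Complex.ofReal_re]
      have h1 := hωt t ht hte
      have h2 := (hV t ht (hte.trans hε1)).2.1
      nlinarith
  -- the metric along the segment
  have hmet : ∀ t : ℝ, 0 < t → t ≤ ε → kobMetric D (o + (t:ℂ) • n) n ≤ 1/(2*t) + 3 * V t := by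
    intro t ht hte
    obtain ⟨hV1, hV2, hV3⟩ := hV t ht (hte.trans hε1)
    have hVp : 0 < V t := (by positivity : 0 < 1 / r₀).trans_le hV1
    set c : ℝ := 1 / (2 * V t) with hc
    set a : ℝ := 2 * t^2 * V t with ha
    have hcV : c * V t = 1/2 := by rw [hc]; field_simp
    have hc0 : 0 < c := by positivity
    have ha0 : 0 < a := by positivity
    have hct : 2 * t ≤ c := by
      rw [hc, le_div_iff₀ (by positivity)]
      linarith only [hV2]
    have hat : 2 * a ≤ t := by
      have := mul_le_mul_of_nonneg_left hV2 ht.le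
      rw [ha]; linarith only [this]
    have hcr : 2 * c ≤ r₀ := by
      have : 1 / V t ≤ r₀ := by
        rw [div_le_iff₀ hVp]
        rw [div_le_iff₀ hr₀p] at hV1
        linarith
      have e : 2 * c = 1 / V t := by rw [hc]; field_simp
      linarith
    have htc : |t - c| < c - a := by
      rw [abs_of_nonpos (by linarith)]
      linarith
    have hdisc : ∀ ζ ∈ ball (c:ℂ) (c - a), o + ζ • n ∈ D := by
      have himg : IsPreconnected ((fun ζ : ℂ => o + ζ • n) '' ball (c:ℂ) (c - a)) := by
        refine (convex_ball (c:ℂ) (c - a)).isPreconnected.image _ (Continuous.continuousOn ?_)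
        fun_prop
      have hsub := subset_of_disjoint_frontier himg hD ?_ (x := o + (t:ℂ) • n)
        ⟨(t:ℂ), ?_, rfl⟩ (hseg t ht hte)
      · intro ζ hζ
        exact hsub ⟨ζ, hζ, rfl⟩
      · rintro _ ⟨ζ, hζ, rfl⟩
        rw [mem_ball, dist_eq_norm] at hζ
        have hζn : ‖ζ‖ ≤ r₀ := by
          have h1 : ‖ζ‖ ≤ ‖ζ - c‖ + ‖(c:ℂ)‖ := by
            have := norm_add_le (ζ - c) (c:ℂ)
            simpa using this
          rw [Complex.norm_real, Real.norm_of_nonneg hc0.le] at h1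
          linarith
        refine hfree ζ hζn ?_
        have hsq : ‖ζ - c‖^2 < (c - a)^2 := by
          have := norm_nonneg (ζ - c)
          gcongr
        have e1 : ‖ζ - c‖^2 = ‖ζ‖^2 - 2 * c * ζ.re + c^2 := by
          rw [← Complex.normSq_eq_norm_sq, ← Complex.normSq_eq_norm_sq, Complex.normSq_apply,
            Complex.normSq_apply]
          simp
          ring
        rw [e1] at hsq
        set m := ‖ζ‖ with hm
        have hm0 : 0 ≤ m := norm_nonneg _
        -- Re ζ > m² V + a/2
        have hre : m^2 * V t + a/2 < ζ.re :=
          re_bound hcV hc0 ha0 (by linarith) hsq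
        refine lt_of_le_of_lt ?_ hre
        rcases le_total t m with htm | htm
        · have h1 := mul_le_mul_of_nonneg_right (hV3 m htm hζn) hm0
          linarith only [h1, ha0]
        · have h1 : ω m ≤ ω t := hωm ⟨hm0, by linarith⟩ ⟨ht.le, by linarith⟩ htm
          have h2 := hωt t ht hte
          have h3 := hω0 m ⟨hm0, by linarith⟩
          have h4 : ω m * m ≤ (t * V t) * t := by
            have : ω m ≤ t * V t := h1.trans h2
            gcongr
          have h5 : (t * V t) * t = a / 2 := by rw [ha]; ring
          have h6 : 0 ≤ m^2 * V t := by positivity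
          linarith
      · rw [mem_ball, Complex.dist_eq, ← Complex.ofReal_sub, Complex.norm_real, Real.norm_eq_abs]
        exact htc
    have h1 := kobMetric_le_of_disc (D := D) (p := o) (n := n) (t := t) (c := c) (ρ := c - a)
      (by linarith) htc hdisc 1 (by simp)
    rw [one_smul] at h1
    exact h1.trans (disc_bound ht hVp hV2)
  refine ⟨δ, o + (ε:ℂ) • n, hδ0, ?_, ?_, ?_, ?_⟩
  · have hδε' : δ ≤ ε := by linarith
    have hVs : IntegrableOn V (Ioc δ ε) := hVi.mono_set (Ioc_subset_Ioc hδ0.le (by linarith))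
    have hinv : IntervalIntegrable (fun t : ℝ => 1/(2*t)) volume δ ε := by
      refine ContinuousOn.intervalIntegrable ?_
      rw [uIcc_of_le hδε']
      refine ContinuousOn.div continuousOn_const (by fun_prop) ?_
      intro t ht
      have : 0 < t := hδ0.trans_le ht.1
      positivity
    have hinv' := (intervalIntegrable_iff_integrableOn_Ioc_of_le hδε').1 hinv
    have hpath := hasPath_segment (D := D) (p := o) (v := n) (B := fun t => 1/(2*t) + 3 * V t) hδε'
      (fun t ht => hseg t (hδ0.trans_le ht.1) ht.2)
      (fun t ht => hmet t (hδ0.trans_le ht.1) ht.2)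
      (hinv'.add (hVs.const_mul 3))
    rw [← hxn] at hpath
    obtain ⟨a, b, σ, g, q1, q2, q3, q4, q5, q6⟩ := hpath
    refine ⟨a, b, σ, g, q1, q2, q3, q4, q5, q6.trans ?_⟩
    rw [integral_add hinv' (hVs.const_mul 3), integral_const_mul]
    have i1 : ∫ t in Ioc δ ε, 1/(2*t) = Real.log (ε/δ) / 2 := by
      rw [← intervalIntegral.integral_of_le hδε']
      have : ∀ t : ℝ, 1/(2*t) = (1/2) * (1/t) := by intro t; rw [one_div_mul_one_div]
      simp_rw [this]
      rw [intervalIntegral.integral_const_mul, integral_one_div_of_pos hδ0 hε]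
      ring
    have i2 : ∫ t in Ioc δ ε, V t ≤ ∫ t in Ioc (0:ℝ) 1, |V t| := by
      calc ∫ t in Ioc δ ε, V t ≤ ∫ t in Ioc δ ε, |V t| :=
            integral_mono hVs hVs.abs (fun t => le_abs_self _)
        _ ≤ _ := by
            refine setIntegral_mono_set hVi.abs ?_ ?_
            · exact Eventually.of_forall fun t => abs_nonneg _
            · exact (Ioc_subset_Ioc hδ0.le (by linarith)).eventuallyLE
    rw [i1]
    linarith
  · refine subset_of_disjoint_frontier (convex_ball _ _).isPreconnected hD ?_
      (mem_ball_self (by positivity)) (hseg ε hε le_rfl)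
    intro q hq hqf
    rw [mem_ball, dist_eq_norm] at hq
    set e := q - (o + (ε:ℂ) • n) with he
    have hqo : q - o = (ε:ℂ) • n + e := by rw [he]; abel
    have hεn : ‖(ε:ℂ) • n‖ = ε := by
      rw [norm_smul, hn1, Complex.norm_real, Real.norm_of_nonneg hε.le, mul_one]
    have hnq : ‖q - o‖ ≤ 5/4 * ε := by
      rw [hqo]
      have := norm_add_le ((ε:ℂ) • n) e
      linarith
    have h1 := hkey q hqf (by linarith)
    have h2 : - μ (q - o) = ε - μ e := by
      rw [hqo, map_add, hslice, Complex.ofReal_re]; ring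
    have h3 : μ e ≤ ε/4 := by
      have := μ.le_opNorm e
      rw [hμ1, Real.norm_eq_abs, one_mul] at this
      linarith [le_abs_self (μ e)]
    obtain ⟨-, hV2, hV3⟩ := hV ε hε hε1
    have h4 : ω ‖q - o‖ ≤ ω (5/4 * ε) :=
      hωm ⟨norm_nonneg _, by linarith⟩ ⟨by positivity, by linarith⟩ hnq
    have h5 := hV3 (5/4 * ε) (by linarith) (by linarith)
    have h6 : ω ‖q - o‖ ≤ 5/16 := by linarith
    have h7 : ω ‖q - o‖ * ‖q - o‖ ≤ 5/16 * (5/4 * ε) := by gcongr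
    linarith
  · have : o + (ε:ℂ) • n - x = ((ε - δ : ℝ) : ℂ) • n := by
      nth_rewrite 1 [hxn]
      push_cast
      rw [sub_smul]
      abel
    rw [this, norm_smul, hn1, Complex.norm_real, Real.norm_of_nonneg (by linarith)]
    linarith
  · intro z hz d hd hbd
    have hneg : ∀ w ∈ D, μ (w - o) < 0 := by
      intro w hw
      obtain ⟨s, hs, hb⟩ := Metric.isOpen_iff.1 hD w hw
      linarith [nu_ball hμ1 (hνs o ho hoW) hs hb]
    have hz1 := nu_ball hμ1 (hνs o ho hoW) hd hbd
    have hx1 : - μ (x - o) = δ := by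
      have : x - o = (δ:ℂ) • n := by nth_rewrite 1 [hxn]; abel
      rw [this, hslice]; simp
    have hlog : Real.log (d / δ) ≤ |Real.log (- μ (z - o)) - Real.log (- μ (x - o))| := by
      rw [hx1, Real.log_div hd.ne' hδ0.ne']
      refine le_trans ?_ (le_abs_self _)
      gcongr
      linarith
    have k1 := kobDist_lower hD hconv μ hneg hx hz
    have k2 := kobDist_lower hD hconv μ hneg hz hx
    rw [abs_sub_comm] at k2
    constructor <;> linarith

lemma hasPath_middle [CompleteSpace E] {D : Set E} (hconv : Convex ℝ D) {p q : E} {ε : ℝ}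
    (hε : 0 < ε) (hp : ball p (ε/4) ⊆ D) (hq : ball q (ε/4) ⊆ D) (hpq : ‖q - p‖ ≤ 3 * ε) :
    HasPath D p q 12 := by
  have hball : ∀ t ∈ Icc (0:ℝ) 1, ball (p + (t:ℂ) • (q - p)) (ε/4) ⊆ D := by
    intro t ht z hz
    set e := z - (p + (t:ℂ) • (q - p)) with he
    rw [mem_ball, dist_eq_norm] at hz
    have h1 : p + e ∈ D := hp (by rw [mem_ball, dist_eq_norm, add_sub_cancel_left]; exact hz)
    have h2 : q + e ∈ D := hq (by rw [mem_ball, dist_eq_norm, add_sub_cancel_left]; exact hz)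
    have h3 := hconv.add_smul_sub_mem h1 h2 ht
    convert h3 using 1
    rw [add_sub_add_right_eq_sub, ← Complex.coe_smul, he]
    abel
  have key := hasPath_segment (D := D) (p := p) (v := q - p) (a := 0) (b := 1) (B := fun _ => 12)
    zero_le_one (fun t ht => hball t ht (mem_ball_self (by positivity))) ?_ (by simp)
  · simpa using key
  · intro t ht
    refine (kobMetric_le_of_ball (by positivity) (hball t ht) _).trans ?_
    rw [div_le_iff₀ (by positivity)]
    linarith

theorem gromov_main [FiniteDimensional ℂ E] (Ω : Set E)
    (hΩo : IsOpen Ω) (hconv : Convex ℝ Ω) (z₀ : E) (hz₀ : z₀ ∈ Ω)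
    (ξ : E) (hξ : ξ ∈ frontier Ω) (hdini : DiniSmoothBoundaryPoint Ω ξ)
    (x y : ℕ → E) (hx : ∀ k, x k ∈ Ω) (hy : ∀ k, y k ∈ Ω)
    (hxlim : Tendsto x atTop (𝓝 ξ)) (hylim : Tendsto y atTop (𝓝 ξ)) :
    Tendsto (fun k => gromovProd Ω z₀ (x k) (y k)) atTop atTop := by
  have hcompl : CompleteSpace E := FiniteDimensional.complete ℂ E
  obtain ⟨r, C, hr, hclimb⟩ := climb hΩo hconv hξ hdini
  obtain ⟨d, hd, hbd⟩ := Metric.isOpen_iff.1 hΩo z₀ hz₀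
  rw [Filter.tendsto_atTop]
  intro M
  set ε : ℝ := min r (Real.exp (Real.log d - 2 * M - 2 * C - 12)) with hε
  have hε0 : 0 < ε := lt_min hr (Real.exp_pos _)
  have hεl : Real.log ε ≤ Real.log d - 2 * M - 2 * C - 12 := by
    have := Real.log_le_log hε0 (min_le_right r (Real.exp (Real.log d - 2 * M - 2 * C - 12)))
    rwa [Real.log_exp] at this
  have hxe := (Metric.tendsto_nhds.1 hxlim) (ε/2) (by positivity)
  have hye := (Metric.tendsto_nhds.1 hylim) (ε/2) (by positivity)
  filter_upwards [hxe, hye] with k hk1 hk2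
  rw [dist_eq_norm] at hk1 hk2
  obtain ⟨δ, p, hδ, hp1, hp2, hp3, hp4⟩ := hclimb ε hε0 (min_le_left _ _) (x k) (hx k) hk1
  obtain ⟨δ', q, hδ', hq1, hq2, hq3, hq4⟩ := hclimb ε hε0 (min_le_left _ _) (y k) (hy k) hk2
  have hpq : ‖q - p‖ ≤ 3 * ε := by
    have e : q - p = (q - y k) + ((y k - ξ) + ((ξ - x k) + (x k - p))) := by abel
    rw [e]
    have h1 := norm_add_le (q - y k) ((y k - ξ) + ((ξ - x k) + (x k - p)))
    have h2 := norm_add_le (y k - ξ) ((ξ - x k) + (x k - p))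
    have h3 := norm_add_le (ξ - x k) (x k - p)
    rw [norm_sub_rev ξ, norm_sub_rev (x k) p] at h3
    linarith
  have hmid := hasPath_middle hconv hε0 hp2 hq2 hpq
  have hK := kobDist_le_of_hasPath ((hp1.trans hmid).trans hq1.symm)
  have l1 := (hp4 z₀ hz₀ d hd hbd).1
  have l2 := (hq4 z₀ hz₀ d hd hbd).2
  rw [Real.log_div hd.ne' hδ.ne'] at l1
  rw [Real.log_div hd.ne' hδ'.ne'] at l2
  rw [Real.log_div hε0.ne' hδ.ne', Real.log_div hε0.ne' hδ'.ne'] at hK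
  unfold gromovProd
  linarith

end Geometry

theorem statement_9 {n : ℕ}
    (Ω : Set (EuclideanSpace ℂ (Fin n)))
    (hΩo : IsOpen Ω) (hne : Ω.Nonempty) (hΩb : Bornology.IsBounded Ω)
    (hconv : Convex ℝ Ω)
    (hdini : ∀ x ∈ frontier Ω, DiniSmoothBoundaryPoint Ω x)
    (z₀ : EuclideanSpace ℂ (Fin n)) (hz₀ : z₀ ∈ Ω)
    (ξ : EuclideanSpace ℂ (Fin n)) (hξ : ξ ∈ frontier Ω)
    (x y : ℕ → EuclideanSpace ℂ (Fin n)) (hx : ∀ k, x k ∈ Ω) (hy : ∀ k, y k ∈ Ω)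
    (hxlim : Tendsto x atTop (𝓝 ξ)) (hylim : Tendsto y atTop (𝓝 ξ)) :
    Tendsto (fun k => gromovProd Ω z₀ (x k) (y k)) atTop atTop := by
  exact gromov_main Ω hΩo hconv z₀ hz₀ ξ hξ (hdini ξ hξ) x y hx hy hxlim hylim
end

section
/- Let Ω ⊂ ℂⁿ be a bounded convex domain. Then for every x ∈ Ω and every v ∈ ℂⁿ\{0}, the Kobayashi metric satisfies |v|/(2 δ_Ω(x;v)) ≤ k_Ω(x;v) ≤ |v|/δ_Ω(x;v). -/
open Metric Set MeasureTheory Filter Topology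

/-- A holomorphic map of the disc to the left half plane satisfies `|h'(0)| ≤ 2 |h(0)|`. -/
lemma halfplane_schwarz (h : ℂ → ℂ) (hd : DifferentiableOn ℂ h (ball (0:ℂ) 1))
    (hre : ∀ z ∈ ball (0:ℂ) 1, (h z).re < 0) : ‖deriv h 0‖ ≤ 2 * ‖h 0‖ := by
  have h00 : (0:ℂ) ∈ ball (0:ℂ) 1 := by simp
  have hre0 := hre 0 h00
  set b : ℂ := (starRingEnd ℂ) (h 0) with hb
  have hbre : b.re = (h 0).re := by simp [hb]
  have hbim : b.im = -(h 0).im := by simp [hb]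
  have hne : ∀ z ∈ ball (0:ℂ) 1, h z + b ≠ 0 := by
    intro z hz h0
    have h1 := congrArg Complex.re h0
    simp only [Complex.add_re, Complex.zero_re, hbre] at h1
    linarith [hre z hz]
  have hφd : DifferentiableOn ℂ (fun z => (h z - h 0) / (h z + b)) (ball (0:ℂ) 1) :=
    (hd.sub_const _).div (hd.add_const _) hne
  have hmaps : MapsTo (fun z => (h z - h 0) / (h z + b)) (ball (0:ℂ) 1)
      (closedBall ((fun z => (h z - h 0) / (h z + b)) 0) 1) := by
    intro z hz
    have hp : 0 < ‖h z + b‖ := norm_pos_iff.2 (hne z hz)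
    simp only [sub_self, zero_div, mem_closedBall, dist_zero_right, norm_div]
    rw [div_le_one hp]
    rw [← sq_le_sq₀ (norm_nonneg _) (norm_nonneg _), Complex.sq_norm, Complex.sq_norm,
      Complex.normSq_apply, Complex.normSq_apply]
    simp only [Complex.add_re, Complex.add_im, Complex.sub_re, Complex.sub_im, hbre, hbim]
    nlinarith [mul_pos_of_neg_of_neg (hre z hz) hre0]
  have hs := Complex.norm_deriv_le_div_of_mapsTo_ball hφd hmaps one_pos
  have hda : DifferentiableAt ℂ h 0 := hd.differentiableAt (isOpen_ball.mem_nhds h00)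
  have hder : HasDerivAt (fun z => (h z - h 0) / (h z + b)) (deriv h 0 / (h 0 + b)) 0 := by
    have h2 := (hda.hasDerivAt.sub_const (h 0)).div (hda.hasDerivAt.add_const b) (hne 0 h00)
    have h3 := hne 0 h00
    have h4 : (deriv h 0 * (h 0 + b) - (h 0 - h 0) * deriv h 0) / (h 0 + b) ^ 2
        = deriv h 0 / (h 0 + b) := by
      rw [sub_self, zero_mul, sub_zero, sq, mul_div_mul_right _ _ h3]
    rw [h4] at h2
    exact h2
  rw [hder.deriv, norm_div, div_one, div_le_one (norm_pos_iff.2 (hne 0 h00))] at hs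
  calc ‖deriv h 0‖ ≤ ‖h 0 + b‖ := hs
    _ ≤ ‖h 0‖ + ‖b‖ := norm_add_le _ _
    _ = 2 * ‖h 0‖ := by simp [hb]; ring

lemma segment_meets_frontier {F : Type*} [NormedAddCommGroup F] [NormedSpace ℂ F]
    (D : Set F) (x v : F) (hx : x ∈ D) (c : ℂ) (hc : x + c • v ∉ D) :
    ∃ t ∈ Icc (0:ℝ) 1, x + ((t:ℂ) * c) • v ∈ frontier D := by
  by_contra! hcon
  let φ : ℝ → F := fun t => x + ((t:ℂ) * c) • v
  have hφ : Continuous φ := by fun_prop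
  have hpre : IsPreconnected (φ '' Icc (0:ℝ) 1) := isPreconnected_Icc.image _ hφ.continuousOn
  have hcov : φ '' Icc (0:ℝ) 1 ⊆ interior D ∪ interior Dᶜ := by
    rintro _ ⟨t, ht, rfl⟩
    have := hcon t ht
    rw [← mem_compl_iff, compl_frontier_eq_union_interior] at this
    exact this
  have e0 : φ 0 = x := by simp [φ]
  have e1 : φ 1 = x + c • v := by simp [φ]
  have m0 : φ 0 ∈ φ '' Icc (0:ℝ) 1 := mem_image_of_mem _ (by simp)
  have m1 : φ 1 ∈ φ '' Icc (0:ℝ) 1 := mem_image_of_mem _ (by simp)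
  have n0 : φ 0 ∈ interior D := by
    rcases hcov m0 with h | h
    · exact h
    · exact absurd (e0 ▸ hx) (interior_subset h)
  have n1 : φ 1 ∈ interior Dᶜ := by
    rcases hcov m1 with h | h
    · exact absurd (e1 ▸ interior_subset h) hc
    · exact h
  obtain ⟨y, -, hy1, hy2⟩ := hpre _ _ isOpen_interior isOpen_interior hcov ⟨_, m0, n0⟩ ⟨_, m1, n1⟩
  exact interior_subset hy2 (interior_subset hy1)

theorem statement_11 {n : ℕ}
    (Ω : Set (EuclideanSpace ℂ (Fin n)))
    (hΩo : IsOpen Ω) (hne : Ω.Nonempty) (hΩb : Bornology.IsBounded Ω)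
    (hconv : Convex ℝ Ω)
    (x : EuclideanSpace ℂ (Fin n)) (hx : x ∈ Ω) (v : EuclideanSpace ℂ (Fin n)) (hv : v ≠ 0) :
    ‖v‖ / (2 * bdistDir Ω x v) ≤ kobMetric Ω x v ∧
    kobMetric Ω x v ≤ ‖v‖ / bdistDir Ω x v := by
  have hvp : 0 < ‖v‖ := norm_pos_iff.2 hv
  set S : Set (EuclideanSpace ℂ (Fin n)) := frontier Ω ∩ {w | ∃ c : ℂ, w = x + c • v} with hS
  have hSne : S.Nonempty := by
    obtain ⟨R, hR⟩ := hΩb.subset_closedBall x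
    have hR0 : 0 ≤ R := by simpa using hR hx
    have hout : x + (((R + 1) / ‖v‖ : ℝ) : ℂ) • v ∉ Ω := by
      intro hin
      have h1 := hR hin
      rw [mem_closedBall, dist_eq_norm, add_sub_cancel_left, norm_smul, Complex.norm_real,
        Real.norm_of_nonneg (by positivity), div_mul_cancel₀ _ hvp.ne'] at h1
      linarith
    obtain ⟨t, -, ht⟩ := segment_meets_frontier Ω x v hx _ hout
    exact ⟨_, ht, _, rfl⟩
  have hSc : IsClosed S := by
    refine isClosed_frontier.inter ?_
    have h1 : IsClosed ((Submodule.span ℂ {v} : Submodule ℂ (EuclideanSpace ℂ (Fin n))) :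
        Set (EuclideanSpace ℂ (Fin n))) := Submodule.closed_of_finiteDimensional _
    have h2 : {w | ∃ c : ℂ, w = x + c • v} = (fun w => w - x) ⁻¹'
        ((Submodule.span ℂ {v} : Submodule ℂ (EuclideanSpace ℂ (Fin n))) :
        Set (EuclideanSpace ℂ (Fin n))) := by
      ext w
      simp only [mem_ofPred_eq, mem_preimage, SetLike.mem_coe, Submodule.mem_span_singleton]
      refine exists_congr fun c => ?_
      rw [eq_sub_iff_add_eq, add_comm, eq_comm]
    rw [h2]
    exact h1.preimage (by fun_prop)
  obtain ⟨p, hpS, hpd⟩ := hSc.exists_infDist_eq_dist hSne x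
  have hδ : bdistDir Ω x v = dist x p := hpd
  have hpΩ : p ∉ Ω := by
    have := hpS.1
    rw [hΩo.frontier_eq] at this
    exact this.2
  have hδpos : 0 < bdistDir Ω x v := by
    rw [hδ]
    exact dist_pos.2 (fun h => hpΩ (h ▸ hx))
  set δ := bdistDir Ω x v with hδdef
  have hmem : ‖v‖ / δ ∈ { r : ℝ | ∃ (f : ℂ → EuclideanSpace ℂ (Fin n)) (ξ : ℂ),
      DifferentiableOn ℂ f (ball (0:ℂ) 1) ∧ MapsTo f (ball (0:ℂ) 1) Ω ∧
      f 0 = x ∧ ξ • derivWithin f (ball (0:ℂ) 1) 0 = v ∧ r = ‖ξ‖ } := by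
    refine ⟨fun z => x + (z * ((δ / ‖v‖ : ℝ) : ℂ)) • v, ((‖v‖ / δ : ℝ) : ℂ),
      ?_, ?_, by simp, ?_, ?_⟩
    · fun_prop
    · intro z hz
      by_contra hout
      obtain ⟨t, ht, hfr⟩ := segment_meets_frontier Ω x v hx _ hout
      have h1 : δ ≤ dist x (x + ((t:ℂ) * (z * ((δ / ‖v‖ : ℝ) : ℂ))) • v) :=
        infDist_le_dist_of_mem ⟨hfr, _, rfl⟩
      rw [dist_eq_norm, sub_add_cancel_left, norm_neg, norm_smul, norm_mul, norm_mul,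
        Complex.norm_real, Complex.norm_real, Real.norm_of_nonneg ht.1,
        Real.norm_of_nonneg (by positivity)] at h1
      have h2 : t * (‖z‖ * (δ / ‖v‖)) * ‖v‖ = t * (‖z‖ * δ) := by field_simp
      rw [h2] at h1
      have hz1 : ‖z‖ < 1 := by simpa using hz
      have h3 : ‖z‖ * δ < δ := by nlinarith
      have h4 : t * (‖z‖ * δ) ≤ ‖z‖ * δ :=
        mul_le_of_le_one_left (by positivity) ht.2
      linarith
    · rw [derivWithin_of_isOpen isOpen_ball (by simp)]
      have hd : HasDerivAt (fun z : ℂ => x + (z * ((δ / ‖v‖ : ℝ) : ℂ)) • v)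
          ((((δ / ‖v‖ : ℝ) : ℂ)) • v) 0 := by
        have h1 := (((hasDerivAt_id (0:ℂ)).mul_const ((δ / ‖v‖ : ℝ) : ℂ)).smul_const v).const_add x
        simpa using h1
      rw [hd.deriv, smul_smul, ← Complex.ofReal_mul]
      have : ‖v‖ / δ * (δ / ‖v‖) = 1 := by field_simp
      rw [this]; simp
    · rw [Complex.norm_real, Real.norm_of_nonneg (by positivity)]
  refine ⟨?_, ?_⟩
  · refine le_csInf ⟨_, hmem⟩ ?_
    rintro r ⟨f, ξ, hfd, hfm, hf0, hfv, rfl⟩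
    obtain ⟨c, hc⟩ := hpS.2
    obtain ⟨L, hL⟩ := RCLike.geometric_hahn_banach_open_point (𝕜 := ℂ) hconv hΩo hpΩ
    have h00 : (0:ℂ) ∈ ball (0:ℂ) 1 := by simp
    have hfa : DifferentiableAt ℂ f 0 := hfd.differentiableAt (isOpen_ball.mem_nhds h00)
    rw [derivWithin_of_isOpen isOpen_ball h00] at hfv
    have hs := halfplane_schwarz (fun z => L (f z) - L p)
      ((L.differentiable.comp_differentiableOn hfd).sub_const _)
      (fun z hz => by
        have := hL _ (hfm hz)
        simpa using this)
    have hder : HasDerivAt (fun z => L (f z) - L p) (L (deriv f 0)) 0 :=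
      (L.hasFDerivAt.comp_hasDerivAt 0 hfa.hasDerivAt).sub_const _
    have hLx : L x - L p = -(c * L v) := by rw [hc]; simp
    have hδc : δ = ‖c‖ * ‖v‖ := by
      rw [hδ, hc, dist_eq_norm, sub_add_cancel_left, norm_neg, norm_smul]
    rw [hder.deriv, hf0, hLx, norm_neg, norm_mul] at hs
    have hLv : L v = ξ * L (deriv f 0) := by rw [← hfv]; simp
    have hLv0 : 0 < ‖L v‖ := by
      rw [norm_pos_iff]
      intro h0
      have h1 := hL x hx
      rw [h0, mul_zero, neg_zero, sub_eq_zero] at hLx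
      rw [hLx] at h1
      exact lt_irrefl _ h1
    have h5 : ‖L v‖ ≤ ‖ξ‖ * (2 * (‖c‖ * ‖L v‖)) := by
      conv_lhs => rw [hLv, norm_mul]
      gcongr
    have h6 : 1 ≤ ‖ξ‖ * (2 * ‖c‖) := by
      by_contra! h7
      nlinarith
    rw [div_le_iff₀ (by positivity), hδc]
    nlinarith
  · refine csInf_le ⟨0, ?_⟩ hmem
    rintro r ⟨f, ξ, -, -, -, -, rfl⟩
    exact norm_nonneg _
end

section
/- Let Ω ⊂ ℂⁿ be a bounded domain. Then for every κ > 0 and all x, y ∈ Ω, there exists a (1,κ)-almost geodesic σ : [a,b] → Ω with σ(a) = x and σ(b) = y. -/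
open Metric Set MeasureTheory Filter Topology

section Aux
variable {F : Type*} [NormedAddCommGroup F] [NormedSpace ℂ F]

lemma kob_nonneg (D : Set F) (x v : F) : 0 ≤ kobMetric D x v := by
  apply Real.sInf_nonneg
  rintro r ⟨f, ξ, -, -, -, -, rfl⟩
  exact norm_nonneg _

lemma kob_le_of {D : Set F} {x v : F} (f : ℂ → F) (ξ : ℂ)
    (hf : DifferentiableOn ℂ f (ball (0:ℂ) 1)) (hm : MapsTo f (ball (0:ℂ) 1) D)
    (h0 : f 0 = x) (hv : ξ • deriv f 0 = v) : kobMetric D x v ≤ ‖ξ‖ := by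
  apply csInf_le
  · refine ⟨0, ?_⟩
    rintro r ⟨f, ξ, -, -, -, -, rfl⟩
    exact norm_nonneg _
  · refine ⟨f, ξ, hf, hm, h0, ?_, rfl⟩
    rw [derivWithin_of_mem_nhds (ball_mem_nhds _ one_pos)]
    exact hv

/-- the affine disc -/
lemma affine_disc {D : Set F} {x v : F} {r : ℝ} (hr : 0 < r) (hb : ball x r ⊆ D) :
    ∃ (f : ℂ → F) (ξ : ℂ), DifferentiableOn ℂ f (ball (0:ℂ) 1) ∧ MapsTo f (ball (0:ℂ) 1) D ∧
      f 0 = x ∧ ξ • deriv f 0 = v ∧ ‖ξ‖ = ‖v‖ / r := by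
  have hd : ∀ (w : F) (z : ℂ), HasDerivAt (fun z : ℂ => x + z • w) w z := by
    intro w z
    simpa using ((hasDerivAt_id z).smul_const w).const_add x
  set w : F := ((r / ‖v‖ : ℝ) : ℂ) • v with hw
  refine ⟨fun z => x + z • w, ((‖v‖ / r : ℝ) : ℂ),
    fun z _ => (hd w z).differentiableAt.differentiableWithinAt, ?_, by simp, ?_, ?_⟩
  · intro z hz
    apply hb
    have hz1 : ‖z‖ < 1 := by simpa using hz
    have : ‖w‖ ≤ r := by
      rw [hw, norm_smul, Complex.norm_real, Real.norm_of_nonneg (by positivity)]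
      by_cases h : ‖v‖ = 0
      · simp [h, hr.le]
      · field_simp; rfl
    rw [mem_ball, dist_eq_norm]
    simp only [add_sub_cancel_left, norm_smul]
    calc ‖z‖ * ‖w‖ ≤ ‖z‖ * r := by gcongr
      _ < 1 * r := by gcongr
      _ = r := one_mul r
  · rw [(hd w 0).deriv, hw, smul_smul, ← Complex.ofReal_mul]
    by_cases h : v = 0
    · simp [h]
    · have : ‖v‖ ≠ 0 := by simpa using h
      have : ‖v‖ / r * (r / ‖v‖) = 1 := by field_simp
      rw [this]; simp
  · rw [Complex.norm_real, Real.norm_of_nonneg (by positivity)]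

lemma kob_le_ball {D : Set F} {x v : F} {r : ℝ} (hr : 0 < r) (hb : ball x r ⊆ D) :
    kobMetric D x v ≤ ‖v‖ / r := by
  obtain ⟨f, ξ, h1, h2, h3, h4, h5⟩ := affine_disc (v := v) hr hb
  rw [← h5]
  exact kob_le_of f ξ h1 h2 h3 h4

lemma exists_disc {D : Set F} (hD : IsOpen D) {x v : F} (hx : x ∈ D) {α : ℝ}
    (h : kobMetric D x v < α) :
    ∃ (f : ℂ → F) (ξ : ℂ), DifferentiableOn ℂ f (ball (0:ℂ) 1) ∧ MapsTo f (ball (0:ℂ) 1) D ∧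
      f 0 = x ∧ ξ • deriv f 0 = v ∧ ‖ξ‖ < α := by
  obtain ⟨r, hr, hb⟩ := Metric.isOpen_iff.1 hD x hx
  obtain ⟨s, ⟨f, ξ, h1, h2, h3, h4, rfl⟩, hs⟩ := exists_lt_of_csInf_lt (by
    obtain ⟨f, ξ, h1, h2, h3, h4, h5⟩ := affine_disc (v := v) hr hb
    refine ⟨‖ξ‖, f, ξ, h1, h2, h3, ?_, rfl⟩
    rw [derivWithin_of_mem_nhds (ball_mem_nhds _ one_pos)]
    exact h4) h
  rw [derivWithin_of_mem_nhds (ball_mem_nhds _ one_pos)] at h4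
  exact ⟨f, ξ, h1, h2, h3, h4, hs⟩

lemma kob_smul_le {D : Set F} (hD : IsOpen D) {x v : F} (hx : x ∈ D) (c : ℂ) :
    kobMetric D x (c • v) ≤ ‖c‖ * kobMetric D x v := by
  have key : ∀ δ > 0, kobMetric D x (c • v) ≤ ‖c‖ * (kobMetric D x v + δ) := by
    intro δ hδ
    obtain ⟨f, ξ, h1, h2, h3, h4, h5⟩ := exists_disc hD hx (lt_add_of_pos_right (kobMetric D x v) hδ)
    calc _ ≤ ‖c * ξ‖ := kob_le_of f (c * ξ) h1 h2 h3 (by rw [mul_smul, h4])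
      _ = ‖c‖ * ‖ξ‖ := norm_mul _ _
      _ ≤ _ := by gcongr
  have ht : Tendsto (fun δ : ℝ => ‖c‖ * (kobMetric D x v + δ)) (𝓝[>] 0)
      (𝓝 (‖c‖ * (kobMetric D x v + 0))) :=
    (Continuous.tendsto (by fun_prop) 0).mono_left nhdsWithin_le_nhds
  rw [add_zero] at ht
  exact ge_of_tendsto ht (by filter_upwards [self_mem_nhdsWithin] with δ hδ using key δ hδ)

lemma kob_neg_le {D : Set F} (hD : IsOpen D) {x v : F} (hx : x ∈ D) :
    kobMetric D x (-v) ≤ kobMetric D x v := by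
  simpa using kob_smul_le (v := v) hD hx (-1)

lemma kob_usc {D : Set F} (hD : IsOpen D) (α : ℝ) :
    IsOpen {p : F × F | p.1 ∈ D ∧ kobMetric D p.1 p.2 < α} := by
  rw [isOpen_iff_mem_nhds]
  rintro ⟨x, v⟩ ⟨hx, hα⟩
  simp only at hx hα
  -- a disc with nonzero `ξ`
  obtain ⟨f, ξ, h1, h2, h3, h4, h5, hξ⟩ : ∃ (f : ℂ → F) (ξ : ℂ),
      DifferentiableOn ℂ f (ball (0:ℂ) 1) ∧ MapsTo f (ball (0:ℂ) 1) D ∧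
      f 0 = x ∧ ξ • deriv f 0 = v ∧ ‖ξ‖ < α ∧ ξ ≠ 0 := by
    obtain ⟨f, ξ, h1, h2, h3, h4, h5⟩ := exists_disc hD hx hα
    by_cases hξ : ξ = 0
    · have hα0 : 0 < α := (kob_nonneg D x v).trans_lt hα
      refine ⟨fun _ => x, ((α / 2 : ℝ) : ℂ), by fun_prop, fun _ _ => hx, rfl, ?_, ?_, ?_⟩
      · simp [← h4, hξ]
      · rw [Complex.norm_real, Real.norm_of_nonneg (by positivity)]; linarith
      · exact_mod_cast (by positivity : (α / 2) ≠ 0)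
    · exact ⟨f, ξ, h1, h2, h3, h4, h5, hξ⟩
  have hα0 : 0 < α := (norm_nonneg _).trans_lt h5
  obtain ⟨r, hr1, hr2⟩ := exists_between ((div_lt_one hα0).2 h5)
  have hr0 : 0 < r := (by positivity : 0 ≤ ‖ξ‖ / α).trans_lt hr1
  have hsub : closedBall (0:ℂ) r ⊆ ball 0 1 := closedBall_subset_ball hr2
  have hcomp : IsCompact (f '' closedBall (0:ℂ) r) :=
    (isCompact_closedBall _ _).image_of_continuousOn (h1.continuousOn.mono hsub)
  obtain ⟨δ, hδ, hth⟩ := hcomp.exists_thickening_subset_open hD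
    ((h2.mono_left hsub).image_subset)
  have hcont : Continuous (fun p : F × F => ‖p.1 - x‖ + ‖((r : ℂ) / ξ) • (p.2 - v)‖) := by fun_prop
  have hev : ∀ᶠ p in 𝓝 (x, v), ‖p.1 - x‖ + ‖((r : ℂ) / ξ) • (p.2 - v)‖ < δ := by
    apply hcont.continuousAt.eventually_lt continuousAt_const
    simpa using hδ
  have hev2 : ∀ᶠ p : F × F in 𝓝 (x, v), p.1 ∈ D :=
    (continuous_fst.tendsto (x, v)).eventually (hD.mem_nhds hx)
  filter_upwards [hev, hev2] with p hp hp2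
  refine ⟨hp2, ?_⟩
  set w := ((r : ℂ) / ξ) • (p.2 - v) with hw
  have hrC : (r : ℂ) ≠ 0 := by exact_mod_cast hr0.ne'
  have hmapr : ∀ z ∈ ball (0:ℂ) 1, (r : ℂ) * z ∈ closedBall (0:ℂ) r := by
    intro z hz
    have hz1 : ‖z‖ < 1 := by simpa using hz
    rw [mem_closedBall_zero_iff, norm_mul, Complex.norm_real, Real.norm_of_nonneg hr0.le]
    nlinarith
  have hF : ∀ z ∈ ball (0:ℂ) 1, HasDerivAt (fun z : ℂ => f ((r : ℂ) * z) + (p.1 - x) + z • w)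
      ((r : ℂ) • deriv f ((r : ℂ) * z) + w) z := by
    intro z hz
    have hdf : HasDerivAt f (deriv f ((r : ℂ) * z)) ((r : ℂ) * z) :=
      (h1.differentiableAt (isOpen_ball.mem_nhds (hsub (hmapr z hz)))).hasDerivAt
    have hl : HasDerivAt (fun z : ℂ => (r : ℂ) * z) (r : ℂ) z := by
      simpa using (hasDerivAt_id z).const_mul (r : ℂ)
    have := (hdf.scomp z hl).add_const (p.1 - x)
    have hw' : HasDerivAt (fun z : ℂ => z • w) w z := by
      simpa using (hasDerivAt_id z).smul_const w
    exact this.add hw'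
  have hle : kobMetric D p.1 p.2 ≤ ‖ξ / (r : ℂ)‖ := by
    apply kob_le_of (fun z : ℂ => f ((r : ℂ) * z) + (p.1 - x) + z • w)
    · exact fun z hz => (hF z hz).differentiableAt.differentiableWithinAt
    · intro z hz
      apply hth
      rw [mem_thickening_iff]
      refine ⟨_, mem_image_of_mem f (hmapr z hz), ?_⟩
      rw [dist_eq_norm]
      have hz1 : ‖z‖ < 1 := by simpa using hz
      calc ‖f ((r : ℂ) * z) + (p.1 - x) + z • w - f ((r : ℂ) * z)‖ = ‖(p.1 - x) + z • w‖ := by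
            congr 1; abel
        _ ≤ ‖p.1 - x‖ + ‖z • w‖ := norm_add_le _ _
        _ ≤ ‖p.1 - x‖ + ‖w‖ := by
            rw [norm_smul]; nlinarith [norm_nonneg w]
        _ < δ := hp
    · simp [h3]
    · rw [(hF 0 (by simp)).deriv, mul_zero, smul_add, hw, smul_smul, smul_smul]
      have e1 : ξ / (r : ℂ) * r = ξ := by field_simp
      have e2 : ξ / (r : ℂ) * (r / ξ) = 1 := by field_simp
      rw [e1, e2, h4, one_smul]; abel
  refine hle.trans_lt ?_
  rw [norm_div, Complex.norm_real, Real.norm_of_nonneg hr0.le]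
  rw [div_lt_iff₀ hα0] at hr1
  rw [div_lt_iff₀ hr0]; linarith

/-- unit speed curves -/
def UPath (D : Set F) (x y : F) (T : ℝ) (g : ℝ → F) : Prop :=
  0 ≤ T ∧ IntervalIntegrable g volume 0 T ∧
    (∀ t ∈ Icc 0 T, x + (∫ s in (0:ℝ)..t, g s) ∈ D ∧
      kobMetric D (x + ∫ s in (0:ℝ)..t, g s) (g t) ≤ 1) ∧
    x + (∫ s in (0:ℝ)..T, g s) = y

lemma UPath.kobDist_le {D : Set F} {x y : F} {T : ℝ} {g : ℝ → F} (h : UPath D x y T g) :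
    kobDist D x y ≤ T := by
  obtain ⟨hT, hg, hD, hy⟩ := h
  have : kobDist D x y ≤ ∫ t in (0:ℝ)..T, kobMetric D (x + ∫ s in (0:ℝ)..t, g s) (g t) := by
    apply csInf_le
    · refine ⟨0, ?_⟩
      rintro r ⟨a, b, σ, g, hab, -, -, -, -, rfl⟩
      exact intervalIntegral.integral_nonneg hab (fun t _ => kob_nonneg _ _ _)
    · exact ⟨0, T, fun t => x + ∫ s in (0:ℝ)..t, g s, g, hT, ⟨hg, fun t _ => by simp⟩,
        fun t ht => (hD t ht).1, by simp, hy, rfl⟩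
  refine this.trans ?_
  have h2 := intervalIntegral.norm_integral_le_of_norm_le_const (a := 0) (b := T) (C := 1)
    (f := fun t => kobMetric D (x + ∫ s in (0:ℝ)..t, g s) (g t)) (by
      intro t ht
      rw [uIoc_of_le hT] at ht
      rw [Real.norm_of_nonneg (kob_nonneg _ _ _)]
      exact (hD t ⟨ht.1.le, ht.2⟩).2)
  rw [one_mul, sub_zero, abs_of_nonneg hT] at h2
  exact (le_abs_self _).trans h2

lemma UPath.sub {D : Set F} {x y : F} {T : ℝ} {g : ℝ → F} (h : UPath D x y T g)
    {s t : ℝ} (hs : 0 ≤ s) (hst : s ≤ t) (ht : t ≤ T) :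
    UPath D (x + ∫ u in (0:ℝ)..s, g u) (x + ∫ u in (0:ℝ)..t, g u) (t - s) (fun u => g (u + s)) := by
  obtain ⟨hT, hg, hD, hy⟩ := h
  have hi : ∀ a b, a ∈ Icc 0 T → b ∈ Icc 0 T → IntervalIntegrable g volume a b := by
    intro a b ha hb
    exact hg.mono_set (by rw [uIcc_of_le hT]; exact (convex_Icc (0:ℝ) T).ordConnected.uIcc_subset ha hb)
  have h0 : (0:ℝ) ∈ Icc 0 T := ⟨le_rfl, hT⟩
  have hsm : s ∈ Icc 0 T := ⟨hs, hst.trans ht⟩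
  have key : ∀ u, 0 ≤ u → u ≤ t - s → (x + ∫ u in (0:ℝ)..s, g u) + (∫ v in (0:ℝ)..u, g (v + s))
      = x + ∫ v in (0:ℝ)..(u + s), g v := by
    intro u hu hu'
    rw [intervalIntegral.integral_comp_add_right, zero_add, add_assoc,
      intervalIntegral.integral_add_adjacent_intervals (hi _ _ h0 hsm)
        (hi _ _ hsm ⟨by linarith, by linarith⟩)]
  refine ⟨by linarith, ?_, ?_, ?_⟩
  · have := (hi s t hsm ⟨by linarith, ht⟩).comp_add_right s
    simpa using this
  · intro u hu
    rw [key u hu.1 hu.2]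
    exact hD _ ⟨by linarith [hu.1], by linarith [hu.2]⟩
  · rw [key _ (by linarith) le_rfl]; simp

lemma UPath.symm {D : Set F} (hDo : IsOpen D) {x y : F} {T : ℝ} {g : ℝ → F} (h : UPath D x y T g) :
    UPath D y x T (fun u => - g (T - u)) := by
  obtain ⟨hT, hg, hD, hy⟩ := h
  have hi : ∀ a b, a ∈ Icc 0 T → b ∈ Icc 0 T → IntervalIntegrable g volume a b := by
    intro a b ha hb
    exact hg.mono_set (by rw [uIcc_of_le hT]; exact (convex_Icc (0:ℝ) T).ordConnected.uIcc_subset ha hb)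
  have h0 : (0:ℝ) ∈ Icc 0 T := ⟨le_rfl, hT⟩
  have hTm : T ∈ Icc 0 T := ⟨hT, le_rfl⟩
  have key : ∀ u ∈ Icc 0 T, y + (∫ v in (0:ℝ)..u, - g (T - v)) = x + ∫ v in (0:ℝ)..(T - u), g v := by
    intro u hu
    have hm : T - u ∈ Icc 0 T := ⟨by linarith [hu.2], by linarith [hu.1]⟩
    rw [intervalIntegral.integral_neg, intervalIntegral.integral_comp_sub_left, sub_zero, ← hy,
      ← intervalIntegral.integral_add_adjacent_intervals (hi _ _ h0 hm) (hi _ _ hm hTm)]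
    abel
  refine ⟨hT, ?_, ?_, ?_⟩
  · have := (hg.comp_sub_left T).neg
    have h2 := this.symm
    simp only [sub_self, sub_zero] at h2
    exact h2
  · intro u hu
    rw [key u hu]
    have := hD (T - u) ⟨by linarith [hu.2], by linarith [hu.1]⟩
    exact ⟨this.1, (kob_neg_le hDo this.1).trans this.2⟩
  · rw [key T hTm]; simp

lemma UPath.trans {D : Set F} {x y z : F} {S T : ℝ} {g k : ℝ → F} (h : UPath D x y S g)
    (h' : UPath D y z T k) : UPath D x z (S + T) (fun u => if u ≤ S then g u else k (u - S)) := by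
  obtain ⟨hS, hg, hD, hy⟩ := h
  obtain ⟨hT, hk, hD', hz⟩ := h'
  set G : ℝ → F := fun u => if u ≤ S then g u else k (u - S) with hG
  have e1 : ∀ t ∈ Icc 0 S, EqOn G g (uIoc 0 t) := by
    intro t ht u hu
    rw [uIoc_of_le ht.1] at hu
    simp [hG, hu.2.trans ht.2]
  have e2 : ∀ t, S ≤ t → EqOn G (fun u => k (u - S)) (uIoc S t) := by
    intro t ht u hu
    rw [uIoc_of_le ht] at hu
    simp [hG, hu.1]
  have i1 : IntervalIntegrable G volume 0 S := hg.congr (e1 S ⟨hS, le_rfl⟩).symm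
  have i2 : IntervalIntegrable G volume S (S + T) := by
    refine IntervalIntegrable.congr (f := fun u => k (u - S)) (e2 (S + T) (by linarith)).symm ?_
    have := hk.comp_sub_right S
    simpa [add_comm] using this
  have k1 : ∀ t ∈ Icc 0 S, (∫ s in (0:ℝ)..t, G s) = ∫ s in (0:ℝ)..t, g s := by
    intro t ht
    exact intervalIntegral.integral_congr_ae (ae_of_all _ (e1 t ht))
  have k2 : ∀ t ∈ Icc S (S + T), x + (∫ s in (0:ℝ)..t, G s) = y + ∫ s in (0:ℝ)..(t - S), k s := by
    intro t ht
    rw [← intervalIntegral.integral_add_adjacent_intervals i1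
      (i2.mono_set (by
        rw [uIcc_of_le ht.1, uIcc_of_le (by linarith)]
        exact Icc_subset_Icc_right ht.2)), k1 S ⟨hS, le_rfl⟩,
      intervalIntegral.integral_congr_ae (ae_of_all _ (e2 t ht.1)),
      intervalIntegral.integral_comp_sub_right, sub_self, ← add_assoc, hy]
  refine ⟨by linarith, i1.trans i2, ?_, ?_⟩
  · intro t ht
    by_cases hts : t ≤ S
    · rw [k1 t ⟨ht.1, hts⟩]
      have : G t = g t := by simp [hG, hts]
      rw [this]
      exact hD t ⟨ht.1, hts⟩
    · push Not at hts
      rw [k2 t ⟨hts.le, ht.2⟩]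
      have : G t = k (t - S) := by simp [hG, hts]
      rw [this]
      exact hD' _ ⟨by linarith, by linarith [ht.2]⟩
  · rw [k2 _ ⟨by linarith, le_rfl⟩]; simpa using hz

lemma UPath.segment [CompleteSpace F] {D : Set F} {x y : F} {r : ℝ} (hr : 0 < r) (hb : ball x r ⊆ D)
    (hy : ‖y - x‖ < r / 2) : UPath D x y 1 (fun _ => y - x) := by
  refine ⟨zero_le_one, by simp, ?_, by simp⟩
  intro t ht
  simp only [intervalIntegral.integral_const, sub_zero]
  have hn : ‖t • (y - x)‖ < r / 2 := by
    rw [norm_smul, Real.norm_of_nonneg ht.1]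
    nlinarith [ht.2, norm_nonneg (y - x)]
  have hb' : ball (x + t • (y - x)) (r / 2) ⊆ D := by
    refine (ball_subset_ball' ?_).trans hb
    rw [dist_eq_norm, add_sub_cancel_left]; linarith
  refine ⟨hb' (mem_ball_self (by linarith)), (kob_le_ball (by linarith) hb').trans ?_⟩
  rw [div_le_one (by linarith)]; exact hy.le

lemma UPath.exists_of_connected [CompleteSpace F] {D : Set F} (hDo : IsOpen D)
    (hc : IsPreconnected D) {x y : F} (hx : x ∈ D) (hy : y ∈ D) :
    ∃ T g, UPath D x y T g := by
  let U : Set F := {z | z ∈ D ∧ ∃ T g, UPath D x z T g}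
  let V : Set F := {z | z ∈ D ∧ ¬ ∃ T g, UPath D x z T g}
  have hU : IsOpen U := by
    rw [Metric.isOpen_iff]
    rintro z ⟨hz, T, g, h⟩
    obtain ⟨r, hr, hb⟩ := Metric.isOpen_iff.1 hDo z hz
    refine ⟨r / 2, by linarith, fun w hw => ⟨hb (ball_subset_ball (by linarith) hw), ?_⟩⟩
    rw [mem_ball, dist_eq_norm] at hw
    exact ⟨_, _, h.trans (UPath.segment hr hb hw)⟩
  have hV : IsOpen V := by
    rw [Metric.isOpen_iff]
    rintro z ⟨hz, h⟩
    obtain ⟨r, hr, hb⟩ := Metric.isOpen_iff.1 hDo z hz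
    refine ⟨r / 2, by linarith, fun w hw => ⟨hb (ball_subset_ball (by linarith) hw), ?_⟩⟩
    rw [mem_ball, dist_eq_norm] at hw
    rintro ⟨T, g, h'⟩
    exact h ⟨_, _, h'.trans ((UPath.segment hr hb hw).symm hDo)⟩
  by_contra hcon
  have hxU : x ∈ U := ⟨hx, 0, fun _ => 0, le_rfl, by simp, by
    intro t ht
    have h0 : t = 0 := le_antisymm ht.2 ht.1
    subst h0
    obtain ⟨r, hr, hb⟩ := Metric.isOpen_iff.1 hDo x hx
    simp only [intervalIntegral.integral_same, add_zero]
    refine ⟨hx, (kob_le_ball hr hb).trans ?_⟩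
    simp, by simp⟩
  obtain ⟨z, -, ⟨-, hz1⟩, ⟨-, hz2⟩⟩ := hc U V hU hV (fun z hz => by
    by_cases h : ∃ T g, UPath D x z T g
    · exact Or.inl ⟨hz, h⟩
    · exact Or.inr ⟨hz, h⟩) ⟨x, hx, hxU⟩ ⟨y, hy, hy, hcon⟩
  exact hz2 hz1

lemma time_change (h : ℝ → ℝ) (hm : Measurable h) {ε : ℝ} (hε : 0 < ε) (hle : ∀ t, ε ≤ h t)
    (hi : ∀ a b, IntervalIntegrable h volume a b) (a : ℝ) :
    ∃ H : ℝ ≃o ℝ, (∀ t, H t = ∫ s in a..t, h s) ∧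
      Measure.map H (volume.withDensity (fun t => ENNReal.ofReal (h t))) = volume := by
  set H : ℝ → ℝ := fun t => ∫ s in a..t, h s with hH
  have hsub : ∀ s t, H t - H s = ∫ u in s..t, h u := by
    intro s t
    exact intervalIntegral.integral_interval_sub_left (hi _ _) (hi _ _)
  have hlow : ∀ s t, s ≤ t → ε * (t - s) ≤ H t - H s := by
    intro s t hst
    rw [hsub]
    have := intervalIntegral.integral_mono_on (f := fun _ => ε) hst (by simp) (hi s t)
      (fun u _ => hle u)
    rw [intervalIntegral.integral_const, smul_eq_mul] at this
    linarith
  have hmono : StrictMono H := by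
    intro s t hst
    have := hlow s t hst.le
    have h2 : 0 < ε * (t - s) := mul_pos hε (by linarith)
    linarith
  have hcont : Continuous H := intervalIntegral.continuous_primitive hi a
  have hsurj : Function.Surjective H := by
    apply hcont.surjective
    · refine tendsto_atTop_mono' atTop (f₁ := fun t => H 0 + ε * t) ?_ ?_
      · filter_upwards [eventually_ge_atTop 0] with t ht
        have := hlow 0 t ht
        linarith
      · exact tendsto_atTop_add_const_left _ _ (tendsto_id.const_mul_atTop hε)
    · refine tendsto_atBot_mono' atBot (f₁ := fun t => H 0 + ε * t) ?_ ?_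
      · filter_upwards [eventually_le_atBot 0] with t ht
        have := hlow t 0 ht
        linarith
      · exact tendsto_atBot_add_const_left _ _ (tendsto_id.const_mul_atBot hε)
  let Φ : ℝ ≃o ℝ := StrictMono.orderIsoOfSurjective H hmono hsurj
  have hΦ : ∀ t, Φ t = H t := fun t => rfl
  refine ⟨Φ, hΦ, ?_⟩
  symm
  apply Measure.ext_of_Ioc
  intro c d hcd
  have hpre : Φ ⁻¹' (Ioc c d) = Ioc (Φ.symm c) (Φ.symm d) := Φ.preimage_Ioc c d
  have hlt : Φ.symm c ≤ Φ.symm d := Φ.symm.monotone hcd.le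
  rw [Measure.map_apply Φ.continuous.measurable measurableSet_Ioc, hpre,
    withDensity_apply _ measurableSet_Ioc,
    ← ofReal_integral_eq_lintegral_ofReal ((intervalIntegrable_iff_integrableOn_Ioc_of_le hlt).1 (hi _ _))
      (ae_of_all _ fun t => hε.le.trans (hle t)),
    ← intervalIntegral.integral_of_le hlt, ← hsub, ← hΦ, ← hΦ]
  simp

lemma reparam {D : Set F} (hDo : IsOpen D) [MeasurableSpace F] [BorelSpace F]
    [SecondCountableTopology F] [CompleteSpace F]
    {a b : ℝ} (hab : a ≤ b) {σ g : ℝ → F} (hac : IsACWithDeriv σ g a b)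
    (hmaps : MapsTo σ (Icc a b) D) {ε : ℝ} (hε : 0 < ε) :
    ∃ G, UPath D (σ a) (σ b) ((∫ t in a..b, kobMetric D (σ t) (g t)) + ε * (b - a)) G := by
  obtain ⟨hgi, hσ⟩ := hac
  have hgion := (intervalIntegrable_iff_integrableOn_Ioc_of_le hab).1 hgi
  -- a globally defined measurable representative
  obtain ⟨g1, hg1m, hg1i, hg1e, hg1z⟩ : ∃ g1 : ℝ → F, Measurable g1 ∧ Integrable g1 volume ∧
      (∀ᵐ t ∂(volume.restrict (Ioc a b)), g t = g1 t) ∧ ∀ t, t ∉ Ioc a b → g1 t = 0 := by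
    have hgs := hgion.aestronglyMeasurable
    refine ⟨(Ioc a b).indicator (hgs.mk g), ?_, ?_, ?_, ?_⟩
    · exact hgs.stronglyMeasurable_mk.measurable.indicator measurableSet_Ioc
    · rw [integrable_indicator_iff measurableSet_Ioc]
      exact Integrable.congr hgion hgs.ae_eq_mk
    · filter_upwards [hgs.ae_eq_mk, ae_restrict_mem measurableSet_Ioc] with t ht htm
      rw [ht, indicator_of_mem htm]
    · intro t ht
      exact indicator_of_notMem ht _
  set τ : ℝ → F := fun t => σ a + ∫ s in a..t, g1 s with hτ
  have hτσ : ∀ t ∈ Icc a b, τ t = σ t := by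
    intro t ht
    rw [hσ t ht, hτ]
    simp only
    congr 1
    rw [intervalIntegral.integral_of_le ht.1, intervalIntegral.integral_of_le ht.1]
    apply integral_congr_ae
    have := ae_restrict_of_ae_restrict_of_subset (Ioc_subset_Ioc_right ht.2) hg1e
    filter_upwards [this] with s hs using hs.symm
  have hii : ∀ c d, IntervalIntegrable g1 volume c d := fun c d => hg1i.intervalIntegrable
  have hτc : Continuous τ := continuous_const.add (intervalIntegral.continuous_primitive hii a)
  have hτr : ∀ t, τ t ∈ σ '' Icc a b := by
    intro t
    rcases lt_or_ge t a with h | h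
    · refine ⟨a, ⟨le_rfl, hab⟩, ?_⟩
      have : (∫ s in a..t, g1 s) = 0 := by
        rw [intervalIntegral.integral_symm, neg_eq_zero]
        apply intervalIntegral.integral_zero_ae
        refine ae_of_all _ fun s hs => hg1z s ?_
        rw [uIoc_of_le h.le] at hs
        exact fun hs' => absurd hs'.1 (not_lt.2 (hs.2))
      simp [hτ, this]
    · rcases le_or_gt t b with h2 | h2
      · exact ⟨t, ⟨h, h2⟩, (hτσ t ⟨h, h2⟩).symm⟩
      · refine ⟨b, ⟨hab, le_rfl⟩, ?_⟩
        rw [← hτσ b ⟨hab, le_rfl⟩]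
        have : (∫ s in b..t, g1 s) = 0 := by
          apply intervalIntegral.integral_zero_ae
          refine ae_of_all _ fun s hs => hg1z s ?_
          rw [uIoc_of_le h2.le] at hs
          exact fun hs' => absurd hs'.2 (not_le.2 (hs.1))
        simp only [hτ]
        rw [← intervalIntegral.integral_add_adjacent_intervals (hii a b) (hii b t), this, add_zero]
  have himg : σ '' Icc a b = τ '' Icc a b := image_congr fun t ht => (hτσ t ht).symm
  have hτD : ∀ t, τ t ∈ D := fun t => hmaps.image_subset (hτr t)
  obtain ⟨δ, hδ, hth⟩ := (isCompact_Icc.image hτc).exists_thickening_subset_open hDo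
    (himg ▸ hmaps.image_subset)
  -- the speed
  set k : ℝ → ℝ := fun t => kobMetric D (τ t) (g1 t) with hk
  have hkm : Measurable k := by
    apply measurable_of_Iio
    intro α
    have : k ⁻¹' Iio α = (fun t => (τ t, g1 t)) ⁻¹' {p : F × F | p.1 ∈ D ∧ kobMetric D p.1 p.2 < α} := by
      ext t
      simp [hk, hτD t]
    rw [this]
    exact (hτc.measurable.prodMk hg1m) (kob_usc hDo α).measurableSet
  have hkb : ∀ t, k t ≤ ‖g1 t‖ / δ := by
    intro t
    apply kob_le_ball hδ
    refine Subset.trans ?_ hth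
    exact ball_subset_thickening (himg ▸ hτr t) δ
  have hk0 : ∀ t, 0 ≤ k t := fun t => kob_nonneg _ _ _
  have hki : Integrable k volume := by
    refine (hg1i.norm.div_const δ).mono' hkm.aestronglyMeasurable (ae_of_all _ fun t => ?_)
    rw [Real.norm_of_nonneg (hk0 t)]
    exact hkb t
  have hkL : (∫ t in a..b, kobMetric D (σ t) (g t)) = ∫ t in a..b, k t := by
    rw [intervalIntegral.integral_of_le hab, intervalIntegral.integral_of_le hab]
    apply integral_congr_ae
    filter_upwards [hg1e, ae_restrict_mem measurableSet_Ioc] with t ht htm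
    simp only [hk]
    rw [ht, hτσ t (Ioc_subset_Icc_self htm)]
  set h : ℝ → ℝ := fun t => k t + ε with hh
  have hhε : ∀ t, ε ≤ h t := fun t => by simp [hh, hk0 t]
  have hh0 : ∀ t, 0 < h t := fun t => hε.trans_le (hhε t)
  have hhm : Measurable h := hkm.add_const ε
  have hhi : ∀ c d, IntervalIntegrable h volume c d := fun c d =>
    hki.intervalIntegrable.add (by simp)
  obtain ⟨H, hH, hmap⟩ := time_change h hhm hε hhε hhi a
  have hHe : MeasurableEmbedding H := H.toHomeomorph.measurableEmbedding
  set G : ℝ → F := fun u => (h (H.symm u))⁻¹ • g1 (H.symm u) with hG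
  have hfin : ∀ᵐ t ∂(volume : Measure ℝ), ENNReal.ofReal (h t) < ⊤ :=
    ae_of_all _ fun t => ENNReal.ofReal_lt_top
  have hcancel : ∀ t, (ENNReal.ofReal (h t)).toReal • G (H t) = g1 t := by
    intro t
    rw [ENNReal.toReal_ofReal (hh0 t).le, hG]
    simp only [OrderIso.symm_apply_apply]
    rw [smul_smul, mul_inv_cancel₀ (hh0 t).ne', one_smul]
  have hGi : Integrable G volume := by
    rw [← hmap, hHe.integrable_map_iff,
      integrable_withDensity_iff_integrable_smul' hhm.ennreal_ofReal hfin]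
    refine hg1i.congr (ae_of_all _ fun t => (hcancel t).symm)
  have hHa : H a = 0 := by rw [hH]; simp
  have hHb : H b = (∫ t in a..b, kobMetric D (σ t) (g t)) + ε * (b - a) := by
    rw [hH, hkL, hh, intervalIntegral.integral_add hki.intervalIntegrable (by simp),
      intervalIntegral.integral_const, smul_eq_mul, mul_comm]
  have hint : ∀ t, a ≤ t → (∫ u in (0:ℝ)..(H t), G u) = ∫ s in a..t, g1 s := by
    intro t ht
    have h0t : 0 ≤ H t := hHa ▸ H.monotone ht
    rw [intervalIntegral.integral_of_le h0t, intervalIntegral.integral_of_le ht]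
    conv_lhs => rw [← hmap]
    rw [hHe.setIntegral_map]
    have : H ⁻¹' (Ioc 0 (H t)) = Ioc a t := by
      rw [H.preimage_Ioc, ← hHa]; simp
    rw [this, setIntegral_withDensity_eq_setIntegral_toReal_smul hhm.ennreal_ofReal
      (ae_restrict_of_ae hfin) _ measurableSet_Ioc]
    exact integral_congr_ae (ae_of_all _ hcancel)
  refine ⟨G, ?_⟩
  rw [← hHb]
  refine ⟨hHa ▸ H.monotone hab, hGi.intervalIntegrable, ?_, ?_⟩
  · intro u hu
    obtain ⟨t, rfl⟩ := H.surjective u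
    have hat : a ≤ t := H.le_iff_le.1 (hHa ▸ hu.1)
    rw [hint t hat]
    change τ t ∈ D ∧ kobMetric D (τ t) (G (H t)) ≤ 1
    refine ⟨hτD t, ?_⟩
    have : G (H t) = (((h t)⁻¹ : ℝ) : ℂ) • g1 t := by
      simp only [hG, OrderIso.symm_apply_apply]
      rw [Complex.coe_smul]
    rw [this]
    refine (kob_smul_le hDo (hτD t) _).trans ?_
    rw [Complex.norm_real, Real.norm_of_nonneg (inv_nonneg.2 (hh0 t).le), inv_mul_le_iff₀ (hh0 t)]
    simp only [hh, mul_one]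
    change k t ≤ k t + ε
    linarith
  · rw [hint b hab]
    exact hτσ b ⟨hab, le_rfl⟩

lemma UPath.exists_near {D : Set F} (hDo : IsOpen D) (hc : IsPreconnected D)
    [MeasurableSpace F] [BorelSpace F]
    [SecondCountableTopology F] [CompleteSpace F] {x y : F} (hx : x ∈ D) (hy : y ∈ D)
    {δ : ℝ} (hδ : 0 < δ) : ∃ T g, T ≤ kobDist D x y + δ ∧ UPath D x y T g := by
  have hne : kobDist D x y < kobDist D x y + δ / 2 := by linarith
  obtain ⟨L, ⟨a, b, σ, g, hab, hac, hm, rfl, rfl, hL⟩, hlt⟩ := exists_lt_of_csInf_lt (by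
    obtain ⟨T, g, hT, hg, hD, hy⟩ := UPath.exists_of_connected hDo hc hx hy
    exact ⟨_, 0, T, fun t => x + ∫ s in (0:ℝ)..t, g s, g, hT, ⟨hg, fun t _ => by simp⟩,
        fun t ht => (hD t ht).1, by simp, hy, rfl⟩) hne
  obtain ⟨G, hG⟩ := reparam hDo hab hac hm (ε := δ / (2 * (b - a + 1))) (by
    have : 0 < b - a + 1 := by linarith
    positivity)
  refine ⟨_, G, ?_, hG⟩
  rw [← hL]
  have : δ / (2 * (b - a + 1)) * (b - a) ≤ δ / 2 := by
    have h1 : 0 < b - a + 1 := by linarith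
    rw [div_mul_eq_mul_div, div_le_div_iff₀ (by positivity) (by positivity)]
    nlinarith
  linarith

lemma UPath.main {D : Set F} (hDo : IsOpen D) (hc : IsPreconnected D)
    [MeasurableSpace F] [BorelSpace F]
    [SecondCountableTopology F] [CompleteSpace F] {x y : F} (hx : x ∈ D) (hy : y ∈ D)
    {κ : ℝ} (hκ : 0 < κ) : ∃ (a b : ℝ) (σ g : ℝ → F), a ≤ b ∧
      AlmostGeodesicOn D 1 κ σ g a b ∧ σ a = x ∧ σ b = y := by
  obtain ⟨T, g, hTle, hP⟩ := UPath.exists_near hDo hc hx hy hκ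
  have hP' := hP
  obtain ⟨hT, hg, hD, hxy⟩ := hP'
  set σ : ℝ → F := fun t => x + ∫ s in (0:ℝ)..t, g s with hσ
  have hlow : ∀ s t T' g', 0 ≤ s → s ≤ t → t ≤ T → UPath D (σ s) (σ t) T' g' → t - s - κ ≤ T' := by
    intro s t T' g' hs hst htT h
    have h1 := hP.sub le_rfl hs (hst.trans htT)
    have h2 := hP.sub (hs.trans hst) htT le_rfl
    simp only [intervalIntegral.integral_same, add_zero] at h1
    rw [hxy] at h2
    have := ((h1.trans h).trans h2).kobDist_le
    linarith
  refine ⟨0, T, σ, g, hT, ⟨fun t ht => (hD t ht).1, ⟨hg, fun t _ => by simp [hσ]⟩, ?_,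
    ae_of_all _ fun t ht => (hD t ht).2⟩, by simp [hσ], hxy⟩
  intro s hs t ht
  have hsD := (hD s hs).1
  have htD := (hD t ht).1
  rw [div_one, one_mul]
  constructor
  · apply le_of_forall_pos_le_add
    intro δ hδ
    obtain ⟨T', g', hT', h'⟩ := UPath.exists_near hDo hc hsD htD hδ
    rcases le_total s t with hst | hst
    · rw [abs_of_nonneg (by linarith)]
      exact (hlow s t T' g' hs.1 hst ht.2 h').trans hT'
    · rw [abs_of_nonpos (by linarith)]
      have := (hlow t s T' _ ht.1 hst hs.2 (h'.symm hDo)).trans hT'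
      change -(t - s) - κ ≤ kobDist D (σ s) (σ t) + δ
      change s - t - κ ≤ kobDist D (σ s) (σ t) + δ at this
      linarith
  · rcases le_total s t with hst | hst
    · rw [abs_of_nonneg (by linarith)]
      have := (hP.sub hs.1 hst ht.2).kobDist_le
      change kobDist D (σ s) (σ t) ≤ _ at this
      linarith
    · rw [abs_of_nonpos (by linarith)]
      have := ((hP.sub ht.1 hst hs.2).symm hDo).kobDist_le
      change kobDist D (σ s) (σ t) ≤ _ at this
      linarith
end Aux

theorem statement_14 {n : ℕ}
    (Ω : Set (EuclideanSpace ℂ (Fin n)))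
    (hΩo : IsOpen Ω) (hΩc : IsConnected Ω) (hΩb : Bornology.IsBounded Ω)
    (κ : ℝ) (hκ : 0 < κ)
    (x y : EuclideanSpace ℂ (Fin n)) (hx : x ∈ Ω) (hy : y ∈ Ω) :
    ∃ (a b : ℝ) (σ g : ℝ → EuclideanSpace ℂ (Fin n)), a ≤ b ∧
      AlmostGeodesicOn Ω 1 κ σ g a b ∧ σ a = x ∧ σ b = y := by
  exact UPath.main hΩo hΩc.isPreconnected hx hy hκ
end
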